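/- arXiv:1707.04389 — 2 statements merged into one kernel-verified Lean document; each statement's English description precedes it below -/
import Mathlib

section
/- Let n ≥ 2 and let S ⊆ Sⁿ be a subset of the n-sphere (the unit sphere in ℝⁿ⁺¹) that is homeomorphic to the (n−1)-sphere and locally flat in Sⁿ. Then Sⁿ \ S has exactly two connected components, and the closure of each connected component is homeomorphic to the closed unit ball in ℝⁿ. -/
/-!
The sphere `S` is first shown to be two-sided. In a flat chart, `S` has two sides, told apart by a
sign function off `S`, and two such functions differ near each point by a global sign; hence sign
functions on two closed sets glue if those sets meet in a connected set. Bisection produces one on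
every box of `ℝⁿ`, the complement of a point off `S`, and then one on all of `Sⁿ` (`two_sided`).
So the complement of `S` is the disjoint union of two open sets `P` and `N`.

Next, `S` is collared in `P ∪ S`, by stretching `P ∪ S` over one chart after another until an
external collar has been absorbed, as in Connelly's proof (`exists_collar`). Collapsing
what lies beyond the collar gives a map of `P ∪ S` onto the closed unit ball, which takes `S` to the
unit sphere by the given homeomorphism, and whose only nondegenerate fibre is that of the centre
(`exists_collapse`). The same holds for `N`, and the two maps fit together to a map of `Sⁿ` onto
itself with at most two nondegenerate fibres. By Brown's argument each of these fibres is cellular,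
that is, has arbitrarily small neighborhoods that are open cells (`exists_cell` and
`Collapse.exists_cell`).

Squeezing such a cell towards its centre makes the fibre small without moving much the map onto the
ball, which is Bing's shrinking criterion. By the Baire category theorem, some limit of compositions
of the collapse with self-homeomorphisms of `P ∪ S` fixing `S` is injective
(`exists_injective_of_shrinkable`). So `P ∪ S` is homeomorphic to the closed ball, with `P`
corresponding to the open ball (`disk_of_injective`). In particular `P` is connected; likewise `N`.
So `P` and `N` are the components of the complement of `S`, and their closures are `P ∪ S` and
`N ∪ S`.
-/

/-- A subset `S` of a space `M` (thought of as an `n`-manifold) is locally flat if every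
point of `S` has an open neighborhood `U` in `M` and a homeomorphism `h : U ≃ₜ ℝⁿ` taking
`U ∩ S` onto `ℝⁿ⁻¹ × {0}` (the hyperplane where the last coordinate vanishes). -/
def IsLocallyFlat {M : Type*} [TopologicalSpace M] (n : ℕ) (S : Set M) : Prop :=
  ∀ x ∈ S, ∃ U : Set M, IsOpen U ∧ x ∈ U ∧ ∃ h : U ≃ₜ EuclideanSpace ℝ (Fin n),
    ⇑h '' ((↑) ⁻¹' S) =
      {y : EuclideanSpace ℝ (Fin n) | ∀ i : Fin n, (i : ℕ) = n - 1 → y i = 0}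

namespace Schoenflies

open Topology Filter Set

/-! ### Flat charts and two-sidedness -/

/-- A flat chart of the pair `(X, S)`: an open embedding `φ` of the model normed space `V` into
`X` under which `S` corresponds to the hyperplane `ℓ = 0`. -/
structure FlatChart {X V : Type*} [TopologicalSpace X] [NormedAddCommGroup V] [NormedSpace ℝ V]
    (S : Set X) (ℓ : V →L[ℝ] ℝ) (φ : V → X) : Prop where
  emb : IsOpenEmbedding φ
  mem_iff : ∀ z, φ z ∈ S ↔ ℓ z = 0

/-- The sign of the side on which a point lies in the chart `φ`: it is `1` on the image of the
half-space `ℓ > 0` and `-1` elsewhere, in particular outside the range of the chart. -/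
noncomputable def chartSign {X V : Type*} [NormedAddCommGroup V] [NormedSpace ℝ V]
    (ℓ : V →L[ℝ] ℝ) (φ : V → X) (w : X) : ℤˣ :=
  open Classical in if ∃ y, φ y = w ∧ 0 < ℓ y then 1 else -1

/-- The sign function `k` changes sign exactly across `S` near `z`: near `z` and off `S` it is
constant if `z ∉ S`, and agrees up to a global sign with the sign function of some flat chart if
`z ∈ S`. -/
def Good {X V : Type*} [TopologicalSpace X] [NormedAddCommGroup V] [NormedSpace ℝ V]
    (S : Set X) (ℓ : V →L[ℝ] ℝ) (k : X → ℤˣ) (z : X) : Prop :=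
  (z ∉ S ∧ ∃ c : ℤˣ, ∀ᶠ w in 𝓝[Sᶜ] z, k w = c) ∨
  (z ∈ S ∧ ∃ φ : V → X, FlatChart S ℓ φ ∧ z ∈ range φ ∧
    ∃ c : ℤˣ, ∀ᶠ w in 𝓝[Sᶜ] z, k w = c * chartSign ℓ φ w)

section Coloring

variable {X V : Type*} [TopologicalSpace X] [NormedAddCommGroup V] [NormedSpace ℝ V]
  {S : Set X} {ℓ : V →L[ℝ] ℝ} {e : V} {φ ψ : V → X}

lemma chartSign_pos (_h : FlatChart S ℓ φ) {y : V} (hy : 0 < ℓ y) : chartSign ℓ φ (φ y) = 1 := by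
  unfold chartSign
  rw [if_pos ⟨y, rfl, hy⟩]

lemma chartSign_neg (h : FlatChart S ℓ φ) {y : V} (hy : ℓ y < 0) : chartSign ℓ φ (φ y) = -1 := by
  unfold chartSign
  rw [if_neg]
  rintro ⟨z, hz, hz'⟩
  rw [h.emb.injective hz] at hz'
  linarith

lemma exists_pos_near (he : ℓ e = 1) {y : V} (hy : ℓ y = 0) {O : Set V} (hO : O ∈ 𝓝 y) :
    (∃ w ∈ O, 0 < ℓ w) ∧ (∃ w ∈ O, ℓ w < 0) := by
  have h1 : Tendsto (fun t : ℝ => y + t • e) (𝓝 0) (𝓝 y) := by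
    have : Continuous (fun t : ℝ => y + t • e) := by fun_prop
    simpa using this.tendsto 0
  have h2 := h1 hO
  obtain ⟨r, hr, hr'⟩ := Metric.mem_nhds_iff.1 h2
  refine ⟨⟨y + (r/2) • e, hr' (by simp [abs_of_pos hr]; linarith), by simp [hy, he]; linarith⟩,
    ⟨y + (-(r/2)) • e, hr' (by simp [abs_of_pos hr]; linarith), by
      rw [map_add, map_smul, he, hy, smul_eq_mul]; linarith⟩⟩

/-- Near a point of `S`, two flat charts induce the same pair of sides. -/
lemma chart_compare (he : ℓ e = 1) (hφ : FlatChart S ℓ φ) (hψ : FlatChart S ℓ ψ) {z : X}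
    (hz : z ∈ S) (hzφ : z ∈ range φ) (hzψ : z ∈ range ψ) :
    ∃ c : ℤˣ, ∀ᶠ w in 𝓝[Sᶜ] z, chartSign ℓ φ w = c * chartSign ℓ ψ w := by
  obtain ⟨y, rfl⟩ := hzφ
  obtain ⟨y', hy'⟩ := hzψ
  have hly : ℓ y = 0 := (hφ.mem_iff y).1 hz
  have hly' : ℓ y' = 0 := (hψ.mem_iff y').1 (hy' ▸ hz)
  have hO : φ ⁻¹' (range ψ) ∈ 𝓝 y :=
    (hψ.emb.isOpen_range.preimage hφ.emb.continuous).mem_nhds ⟨y', hy'⟩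
  obtain ⟨r, hr, hB⟩ := Metric.mem_nhds_iff.1 hO
  set U1 := φ ⁻¹' (ψ '' {w | 0 < ℓ w})
  set U2 := φ ⁻¹' (ψ '' {w | ℓ w < 0})
  have hU1 : IsOpen U1 := (hψ.emb.isOpenMap _ (isOpen_lt continuous_const ℓ.continuous)).preimage
    hφ.emb.continuous
  have hU2 : IsOpen U2 := (hψ.emb.isOpenMap _ (isOpen_lt ℓ.continuous continuous_const)).preimage
    hφ.emb.continuous
  have hdis : Disjoint U1 U2 := by
    rw [Set.disjoint_left]
    rintro w ⟨a, ha, ha'⟩ ⟨b, hb, hb'⟩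
    have := hψ.emb.injective (ha'.trans hb'.symm)
    subst this
    simp only [mem_ofPred_eq] at ha hb
    linarith
  have hcov : ∀ w ∈ Metric.ball y r, ℓ w ≠ 0 → w ∈ U1 ∪ U2 := by
    intro w hw hlw
    obtain ⟨b, hb⟩ := hB hw
    have : ℓ b ≠ 0 := fun h => hlw ((hφ.mem_iff w).1 (hb ▸ (hψ.mem_iff b).2 h))
    rcases lt_or_gt_of_ne this with h | h
    · right; exact ⟨b, h, hb⟩
    · left; exact ⟨b, h, hb⟩
  have hp : Convex ℝ (Metric.ball y r ∩ {w | 0 < ℓ w}) :=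
    (convex_ball y r).inter (convex_halfSpace_gt ℓ.isLinear 0)
  have hn : Convex ℝ (Metric.ball y r ∩ {w | ℓ w < 0}) :=
    (convex_ball y r).inter (convex_halfSpace_lt ℓ.isLinear 0)
  have c1 := IsPreconnected.subset_or_subset hU1 hU2 hdis
    (fun w hw => hcov w hw.1 (ne_of_gt hw.2)) hp.isPreconnected
  have c2 := IsPreconnected.subset_or_subset hU1 hU2 hdis
    (fun w hw => hcov w hw.1 (ne_of_lt hw.2)) hn.isPreconnected
  have hball : φ '' Metric.ball y r ∈ 𝓝 (φ y) :=
    hφ.emb.isOpenMap.image_mem_nhds (Metric.ball_mem_nhds y hr)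
  have hball' : ψ ⁻¹' (φ '' Metric.ball y r) ∈ 𝓝 y' :=
    hψ.emb.continuous.continuousAt.preimage_mem_nhds (hy' ▸ hball)
  obtain ⟨⟨a, ⟨a', ha', haa⟩, ha⟩, ⟨b, ⟨b', hb', hbb⟩, hb⟩⟩ := exists_pos_near he hly' hball'
  have ha1 : a' ∈ U1 := ⟨a, ha, haa.symm⟩
  have hb2 : b' ∈ U2 := ⟨b, hb, hbb.symm⟩
  have hane : ℓ a' ≠ 0 := fun h => (ne_of_gt ha) ((hψ.mem_iff a).1 (haa ▸ (hφ.mem_iff a').2 h))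
  have hbne : ℓ b' ≠ 0 := fun h => (ne_of_lt hb) ((hψ.mem_iff b).1 (hbb ▸ (hφ.mem_iff b').2 h))
  have key : (∃ c : ℤˣ, ∀ w ∈ Metric.ball y r, ℓ w ≠ 0 →
      chartSign ℓ φ (φ w) = c * chartSign ℓ ψ (φ w)) := by
    rcases c1 with c1 | c1 <;> rcases c2 with c2 | c2
    · exfalso
      rcases lt_or_gt_of_ne hbne with h | h
      · exact Set.disjoint_left.1 hdis (c2 ⟨hb', h⟩) hb2
      · exact Set.disjoint_left.1 hdis (c1 ⟨hb', h⟩) hb2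
    · refine ⟨1, fun w hw hlw => ?_⟩
      rcases lt_or_gt_of_ne hlw with h | h
      · obtain ⟨b, hb, hbb⟩ := c2 ⟨hw, h⟩
        rw [chartSign_neg hφ h, ← hbb, chartSign_neg hψ hb]; rfl
      · obtain ⟨b, hb, hbb⟩ := c1 ⟨hw, h⟩
        rw [chartSign_pos hφ h, ← hbb, chartSign_pos hψ hb]; rfl
    · refine ⟨-1, fun w hw hlw => ?_⟩
      rcases lt_or_gt_of_ne hlw with h | h
      · obtain ⟨b, hb, hbb⟩ := c2 ⟨hw, h⟩
        rw [chartSign_neg hφ h, ← hbb, chartSign_pos hψ hb]; rfl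
      · obtain ⟨b, hb, hbb⟩ := c1 ⟨hw, h⟩
        rw [chartSign_pos hφ h, ← hbb, chartSign_neg hψ hb]; rfl
    · exfalso
      rcases lt_or_gt_of_ne hane with h | h
      · exact Set.disjoint_left.1 hdis ha1 (c2 ⟨ha', h⟩)
      · exact Set.disjoint_left.1 hdis ha1 (c1 ⟨ha', h⟩)
  obtain ⟨c, hc⟩ := key
  refine ⟨c, ?_⟩
  filter_upwards [mem_nhdsWithin_of_mem_nhds hball, self_mem_nhdsWithin] with w hw hwS
  obtain ⟨w', hw', rfl⟩ := hw
  exact hc w' hw' (fun h => hwS ((hφ.mem_iff w').2 h))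

lemma chartSign_eventually (hφ : FlatChart S ℓ φ) {y : V} (hy : ℓ y ≠ 0) :
    ∃ c : ℤˣ, ∀ᶠ w in 𝓝 (φ y), chartSign ℓ φ w = c := by
  rcases lt_or_gt_of_ne hy with h | h
  · refine ⟨-1, ?_⟩
    filter_upwards [hφ.emb.isOpenMap.image_mem_nhds
      ((isOpen_lt ℓ.continuous continuous_const).mem_nhds h)] with w hw
    obtain ⟨a, ha, rfl⟩ := hw
    exact chartSign_neg hφ ha
  · refine ⟨1, ?_⟩
    filter_upwards [hφ.emb.isOpenMap.image_mem_nhds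
      ((isOpen_lt continuous_const ℓ.continuous).mem_nhds h)] with w hw
    obtain ⟨a, ha, rfl⟩ := hw
    exact chartSign_pos hφ ha

lemma good_chartSign (hφ : FlatChart S ℓ φ) {z : X} (hz : z ∈ range φ) :
    Good S ℓ (chartSign ℓ φ) z := by
  by_cases hzS : z ∈ S
  · exact Or.inr ⟨hzS, φ, hφ, hz, 1, by simp⟩
  · obtain ⟨y, rfl⟩ := hz
    obtain ⟨c, hc⟩ := chartSign_eventually hφ (fun h => hzS ((hφ.mem_iff y).2 h))
    exact Or.inl ⟨hzS, c, mem_nhdsWithin_of_mem_nhds hc⟩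

lemma good_const {z : X} (hz : z ∉ S) : Good S ℓ (fun _ => 1) z :=
  Or.inl ⟨hz, 1, by simp⟩

lemma good_congr {k k' : X → ℤˣ} {z : X} (h : Good S ℓ k z) {c : ℤˣ}
    (hc : ∀ᶠ w in 𝓝[Sᶜ] z, k' w = c * k w) : Good S ℓ k' z := by
  rcases h with ⟨hz, d, hd⟩ | ⟨hz, φ, hφ, hzφ, d, hd⟩
  · refine Or.inl ⟨hz, c * d, ?_⟩
    filter_upwards [hc, hd] with w h1 h2
    rw [h1, h2]
  · refine Or.inr ⟨hz, φ, hφ, hzφ, c * d, ?_⟩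
    filter_upwards [hc, hd] with w h1 h2
    rw [h1, h2, mul_assoc]

/-- Two good sign functions differ near a point by a global sign. -/
lemma good_compare (he : ℓ e = 1) {k k' : X → ℤˣ} {z : X} (h : Good S ℓ k z)
    (h' : Good S ℓ k' z) : ∃ c : ℤˣ, ∀ᶠ w in 𝓝[Sᶜ] z, k w = c * k' w := by
  rcases h with ⟨hz, d, hd⟩ | ⟨hz, φ, hφ, hzφ, d, hd⟩ <;>
    rcases h' with ⟨hz', d', hd'⟩ | ⟨hz', φ', hφ', hzφ', d', hd'⟩
  · refine ⟨d * d'⁻¹, ?_⟩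
    filter_upwards [hd, hd'] with w h1 h2
    rw [h1, h2, inv_mul_cancel_right]
  · exact absurd hz' hz
  · exact absurd hz hz'
  · obtain ⟨c, hc⟩ := chart_compare he hφ hφ' hz hzφ hzφ'
    refine ⟨d * c * d'⁻¹, ?_⟩
    filter_upwards [hd, hd', hc] with w h1 h2 h3
    rw [h1, h2, h3, ← mul_assoc, ← mul_assoc, inv_mul_cancel_right]

/-- Goodness is an open condition. -/
lemma good_eventually (hS : IsClosed S) {k : X → ℤˣ} {z : X} (h : Good S ℓ k z) :
    ∀ᶠ z' in 𝓝 z, Good S ℓ k z' := by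
  rcases h with ⟨hz, d, hd⟩ | ⟨hz, φ, hφ, hzφ, d, hd⟩
  · filter_upwards [hS.isOpen_compl.mem_nhds hz, eventually_nhds_nhdsWithin.2 hd] with w h1 h2
    exact Or.inl ⟨h1, d, h2⟩
  · filter_upwards [hφ.emb.isOpen_range.mem_nhds hzφ, eventually_nhds_nhdsWithin.2 hd] with w h1 h2
    exact good_congr (good_chartSign hφ h1) h2

lemma exists_good (hch : ∀ x ∈ S, ∃ φ : V → X, FlatChart S ℓ φ ∧ x ∈ range φ) (z : X) :
    ∃ k, Good S ℓ k z := by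
  by_cases hz : z ∈ S
  · obtain ⟨φ, hφ, hzφ⟩ := hch z hz
    exact ⟨_, good_chartSign hφ hzφ⟩
  · exact ⟨_, good_const hz⟩

lemma nhdsWithin_compl_neBot (he : ℓ e = 1) (hS : IsClosed S)
    (hch : ∀ x ∈ S, ∃ φ : V → X, FlatChart S ℓ φ ∧ x ∈ range φ) (z : X) : (𝓝[Sᶜ] z).NeBot := by
  by_cases hz : z ∈ S
  · obtain ⟨φ, hφ, y, rfl⟩ := hch z hz
    rw [← mem_closure_iff_nhdsWithin_neBot, mem_closure_iff_nhds]
    intro t ht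
    have hly := (hφ.mem_iff y).1 hz
    obtain ⟨⟨w, hw, hw'⟩, -⟩ :=
      exists_pos_near he hly (hφ.emb.continuous.continuousAt.preimage_mem_nhds ht)
    exact ⟨φ w, hw, fun h => (ne_of_gt hw') ((hφ.mem_iff w).1 h)⟩
  · rw [hS.isOpen_compl.nhdsWithin_eq hz]
    infer_instance

/-- On a preconnected set, two good sign functions differ by one global sign. -/
lemma good_uniform (he : ℓ e = 1) (hS : IsClosed S)
    (hch : ∀ x ∈ S, ∃ φ : V → X, FlatChart S ℓ φ ∧ x ∈ range φ) {T : Set X}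
    (hT : IsPreconnected T) {k k' : X → ℤˣ} (hk : ∀ z ∈ T, Good S ℓ k z)
    (hk' : ∀ z ∈ T, Good S ℓ k' z) :
    ∃ c : ℤˣ, ∀ z ∈ T, ∀ᶠ w in 𝓝[Sᶜ] z, k w = c * k' w := by
  have hopen : ∀ c : ℤˣ, IsOpen {z | ∀ᶠ w in 𝓝[Sᶜ] z, k w = c * k' w} := by
    intro c
    rw [isOpen_iff_mem_nhds]
    intro z hz
    exact eventually_nhds_nhdsWithin.2 hz
  have hdis : Disjoint {z | ∀ᶠ w in 𝓝[Sᶜ] z, k w = 1 * k' w}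
      {z | ∀ᶠ w in 𝓝[Sᶜ] z, k w = (-1) * k' w} := by
    rw [Set.disjoint_left]
    intro z h1 h2
    have := nhdsWithin_compl_neBot he hS hch z
    rw [mem_ofPred_eq] at h1 h2
    obtain ⟨w, hw1, hw2⟩ := (h1.and h2).exists
    rw [hw1] at hw2
    have := mul_right_cancel hw2
    exact absurd this (by decide)
  rcases IsPreconnected.subset_or_subset (hopen 1) (hopen (-1)) hdis (fun z hz => by
    obtain ⟨c, hc⟩ := good_compare he (hk z hz) (hk' z hz)
    rcases Int.units_eq_one_or c with rfl | rfl
    · exact Or.inl hc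
    · exact Or.inr hc) hT with h | h
  · exact ⟨1, h⟩
  · exact ⟨-1, h⟩

end Coloring

section Gluing

variable {X V : Type*} [MetricSpace X] [NormedAddCommGroup V] [NormedSpace ℝ V]
  {S : Set X} {ℓ : V →L[ℝ] ℝ} {e : V}

/-- Good sign functions on two closed sets with preconnected intersection glue. -/
lemma good_glue (he : ℓ e = 1) (hS : IsClosed S)
    (hch : ∀ x ∈ S, ∃ φ : V → X, FlatChart S ℓ φ ∧ x ∈ range φ) {K₁ K₂ : Set X}
    (h1 : IsClosed K₁) (h2 : IsClosed K₂) (h12 : IsPreconnected (K₁ ∩ K₂))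
    (hk1 : ∃ k, ∀ z ∈ K₁, Good S ℓ k z) (hk2 : ∃ k, ∀ z ∈ K₂, Good S ℓ k z) :
    ∃ k, ∀ z ∈ K₁ ∪ K₂, Good S ℓ k z := by
  classical
  obtain ⟨k₁, hk1⟩ := hk1
  obtain ⟨k₂, hk2⟩ := hk2
  obtain ⟨c, hc⟩ := good_uniform he hS hch h12 (fun z hz => hk1 z hz.1) (fun z hz => hk2 z hz.2)
  -- The sign at a point is taken from whichever of the two closed sets is nearer.
  let k : X → ℤˣ := fun w => if Metric.infEDist w K₁ ≤ Metric.infEDist w K₂ then k₁ w else c * k₂ w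
  have hlt : ∀ {A B : Set X}, IsClosed A → IsClosed B → ∀ z ∈ A, z ∉ B →
      ∀ᶠ w in 𝓝 z, Metric.infEDist w A < Metric.infEDist w B := by
    intro A B hA hB z hzA hzB
    refine (Metric.continuous_infEDist.tendsto z).eventually_lt
      (Metric.continuous_infEDist.tendsto z) ?_
    rw [Metric.infEDist_zero_of_mem hzA]
    rw [pos_iff_ne_zero, Ne, ← Metric.mem_iff_infEDist_zero_of_closed hB]
    exact hzB
  refine ⟨k, fun z hz => ?_⟩
  by_cases hz1 : z ∈ K₁
  · refine good_congr (hk1 z hz1) (c := 1) ?_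
    by_cases hz2 : z ∈ K₂
    · filter_upwards [hc z ⟨hz1, hz2⟩] with w hw
      simp only [k]
      split_ifs
      · simp
      · rw [hw]; simp
    · filter_upwards [mem_nhdsWithin_of_mem_nhds (hlt h1 h2 z hz1 hz2)] with w hw
      simp only [k]
      rw [if_pos hw.le, one_mul]
  · have hz2 : z ∈ K₂ := hz.resolve_left hz1
    refine good_congr (hk2 z hz2) (c := c) ?_
    filter_upwards [mem_nhdsWithin_of_mem_nhds (hlt h2 h1 z hz2 hz1)] with w hw
    simp only [k]
    rw [if_neg (not_le.2 hw)]

/-- A good sign function exists on the image of any box: bisecting the box repeatedly makes the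
pieces small enough to lie in the domain of a local sign function, and two halves of a box meet
in a box, which is connected. -/
lemma good_box (he : ℓ e = 1) (hS : IsClosed S)
    (hch : ∀ x ∈ S, ∃ φ : V → X, FlatChart S ℓ φ ∧ x ∈ range φ) {n : ℕ}
    {ι : (Fin n → ℝ) → X} (hι : Continuous ι) (hinj : Function.Injective ι)
    (I : BoxIntegral.Box (Fin n)) :
    ∃ k, ∀ z ∈ ι '' (BoxIntegral.Box.Icc I), Good S ℓ k z := by
  classical
  refine BoxIntegral.Box.subbox_induction_on'
    (p := fun I => ∃ k, ∀ z ∈ ι '' (BoxIntegral.Box.Icc I), Good S ℓ k z) I ?_ ?_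
  · intro J _ hJ
    -- `Q T s` is the part of `J` cut down to the half selected by `s` in the directions off `T`.
    let lo : Finset (Fin n) → Set (Fin n) → Fin n → ℝ := fun T s i =>
      if i ∉ T ∧ i ∈ s then (J.lower i + J.upper i) / 2 else J.lower i
    let up : Finset (Fin n) → Set (Fin n) → Fin n → ℝ := fun T s i =>
      if i ∉ T ∧ i ∉ s then (J.lower i + J.upper i) / 2 else J.upper i
    have hJlt := J.lower_lt_upper
    have main : ∀ T : Finset (Fin n), ∀ s : Set (Fin n),
        ∃ k, ∀ z ∈ ι '' (Set.Icc (lo T s) (up T s)), Good S ℓ k z := by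
      intro T
      induction T using Finset.induction_on with
      | empty =>
        intro s
        convert hJ s using 7
        rw [BoxIntegral.Box.Icc_eq_pi, ← Set.pi_univ_Icc]
        congr 1
        ext i x
        by_cases hi : i ∈ s <;> simp [lo, up, BoxIntegral.Box.splitCenterBox, hi]
      | insert a T ha ih =>
        intro s
        have hcl : ∀ s', IsClosed (ι '' (Set.Icc (lo T s') (up T s'))) := fun s' =>
          (isCompact_Icc.image hι).isClosed
        have := good_glue he hS hch (hcl (insert a s)) (hcl (s \ {a})) ?_ (ih _) (ih _)
        · obtain ⟨k, hk⟩ := this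
          refine ⟨k, ?_⟩
          rintro _ ⟨x, hx, rfl⟩
          apply hk
          rw [← image_union]
          refine mem_image_of_mem _ ?_
          rw [Set.mem_Icc, Pi.le_def, Pi.le_def] at hx
          rcases le_total ((J.lower a + J.upper a) / 2) (x a) with h | h
          · left
            rw [Set.mem_Icc, Pi.le_def, Pi.le_def]
            constructor
            · intro i
              have := hx.1 i
              rcases eq_or_ne i a with rfl | hia
              · simp only [lo]; split_ifs <;> simp_all
              · simpa [lo, hia] using this
            · intro i
              have := hx.2 i
              rcases eq_or_ne i a with rfl | hia
              · simp [up] at this ⊢; exact this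
              · simpa [up, hia] using this
          · right
            rw [Set.mem_Icc, Pi.le_def, Pi.le_def]
            constructor
            · intro i
              have := hx.1 i
              rcases eq_or_ne i a with rfl | hia
              · simp [lo] at this ⊢; exact this
              · simpa [lo, hia] using this
            · intro i
              have := hx.2 i
              rcases eq_or_ne i a with rfl | hia
              · simp only [up]; split_ifs <;> simp_all
              · simpa [up, hia] using this
        · rw [← image_inter hinj]
          refine IsPreconnected.image ?_ _ hι.continuousOn
          rw [Set.Icc_inter_Icc]
          exact (convex_Icc _ _).isPreconnected
    convert main Finset.univ ∅ using 7
    rw [BoxIntegral.Box.Icc_def]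
    congr 1 <;> ext i <;> simp [lo, up]
  · intro z _
    obtain ⟨k, hk⟩ := exists_good hch (ι z)
    refine ⟨_, mem_nhdsWithin_of_mem_nhds
      (hι.continuousAt.preimage_mem_nhds (good_eventually hS hk)), ?_⟩
    intro J _ m _ hJU _
    refine ⟨k, ?_⟩
    rintro _ ⟨x, hx, rfl⟩
    exact hJU hx

/-- Let `ℝⁿ`, with `n ≥ 2`, be openly embedded in `X`, and let `S` be a closed locally flat subset
of `X` contained in the image of a ball. Then `S` is two-sided: its complement splits into two open
sets `P` and `N`, and near each of its points `S` has a flat chart with `P` on one side and `N` on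
the other. -/
lemma two_sided (he : ℓ e = 1) (hS : IsClosed S)
    (hch : ∀ x ∈ S, ∃ φ : V → X, FlatChart S ℓ φ ∧ x ∈ range φ) {n : ℕ} (hn : 2 ≤ n)
    {ι : EuclideanSpace ℝ (Fin n) → X} (hι : IsOpenEmbedding ι) {R : ℝ} (hR : 0 < R)
    (hSR : S ⊆ ι '' Metric.ball 0 R) :
    ∃ P N : Set X, IsOpen P ∧ IsOpen N ∧ Disjoint P N ∧ P ∪ N = Sᶜ ∧
      ∀ x ∈ S, ∃ φ : V → X, FlatChart S ℓ φ ∧ x ∈ range φ ∧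
        (∀ z, 0 < ℓ z → φ z ∈ P) ∧ (∀ z, ℓ z < 0 → φ z ∈ N) := by
  have hbox : ∃ k, ∀ z ∈ ι '' Metric.closedBall 0 R, Good S ℓ k z := by
    obtain ⟨k, hk⟩ := good_box he hS hch (ι := fun x => ι (WithLp.toLp 2 x))
      (hι.continuous.comp (PiLp.continuous_toLp 2 _))
      (hι.injective.comp (WithLp.toLp_injective 2))
      ⟨fun _ => -R, fun _ => R, fun _ => by linarith⟩
    refine ⟨k, ?_⟩
    rintro _ ⟨x, hx, rfl⟩
    refine hk _ ⟨WithLp.ofLp x, ?_, rfl⟩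
    have : ∀ i, |x i| ≤ R := fun i =>
      (PiLp.norm_apply_le x i).trans (mem_closedBall_zero_iff.1 hx)
    rw [BoxIntegral.Box.Icc_def, Set.mem_Icc]
    exact ⟨fun i => (abs_le.1 (this i)).1, fun i => (abs_le.1 (this i)).2⟩
  -- The image of a box covering the ball carries a good sign function, and outside the ball a
  -- constant one will do. They glue because the sphere bounding the ball is connected.
  have hout : ∃ k, ∀ z ∈ (ι '' Metric.ball 0 R)ᶜ, Good S ℓ k z :=
    ⟨_, fun z hz => good_const (fun h => hz (hSR h))⟩
  have hsph : IsPreconnected (ι '' Metric.closedBall 0 R ∩ (ι '' Metric.ball 0 R)ᶜ) := by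
    rw [← sdiff_eq, ← image_sdiff hι.injective, Metric.closedBall_sdiff_ball]
    refine (isPreconnected_sphere ?_ _ _).image _ hι.continuous.continuousOn
    rw [rank_eq_card_basis (EuclideanSpace.basisFun (Fin n) ℝ).toBasis]
    simp only [Fintype.card_fin]
    exact_mod_cast hn
  obtain ⟨k, hk⟩ := good_glue he hS hch
    ((isCompact_closedBall _ _).image hι.continuous).isClosed
    (hι.isOpenMap _ Metric.isOpen_ball).isClosed_compl hsph hbox hout
  replace hk : ∀ z, Good S ℓ k z := by
    intro z
    apply hk
    by_cases hz : z ∈ ι '' Metric.ball 0 R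
    · exact Or.inl (image_mono Metric.ball_subset_closedBall hz)
    · exact Or.inr hz
  have hop : ∀ c : ℤˣ, IsOpen {z | z ∉ S ∧ k z = c} := by
    intro c
    rw [isOpen_iff_mem_nhds]
    rintro z ⟨hz, rfl⟩
    rcases hk z with ⟨_, d, hd⟩ | ⟨h, _⟩
    · rw [hS.isOpen_compl.nhdsWithin_eq hz] at hd
      filter_upwards [hd, hS.isOpen_compl.mem_nhds hz] with w hw hw'
      exact ⟨hw', hw.trans hd.self_of_nhds.symm⟩
    · exact absurd h hz
  refine ⟨_, _, hop 1, hop (-1), ?_, ?_, ?_⟩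
  · rw [Set.disjoint_left]
    rintro z ⟨_, h⟩ ⟨_, h'⟩
    rw [h] at h'
    exact absurd h' (by decide)
  · ext z
    have := Int.units_eq_one_or (k z)
    simp only [mem_union, mem_ofPred_eq, mem_compl_iff]
    tauto
  · intro x hx
    obtain ⟨φ, hφ, hxφ⟩ := hch x hx
    obtain ⟨c, hc⟩ := good_uniform he hS hch (isPreconnected_range hφ.emb.continuous)
      (fun z _ => hk z) (fun z hz => good_chartSign hφ hz)
    have hc' : ∀ y, ℓ y ≠ 0 → φ y ∉ S ∧ k (φ y) = c * chartSign ℓ φ (φ y) := by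
      intro y hy
      have hyS : φ y ∉ S := fun h => hy ((hφ.mem_iff y).1 h)
      have := hc _ ⟨y, rfl⟩
      rw [hS.isOpen_compl.nhdsWithin_eq hyS] at this
      exact ⟨hyS, this.self_of_nhds⟩
    -- If `c = -1` the chart has to be reversed.
    rcases Int.units_eq_one_or c with rfl | rfl
    · refine ⟨φ, hφ, hxφ, fun z hz => ?_, fun z hz => ?_⟩
      · have := hc' z (ne_of_gt hz)
        rw [chartSign_pos hφ hz] at this
        simpa using this
      · have := hc' z (ne_of_lt hz)
        rw [chartSign_neg hφ hz] at this
        simpa using this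
    · refine ⟨fun z => φ (-z), ⟨hφ.emb.comp (Homeomorph.neg V).isOpenEmbedding, fun z => ?_⟩,
        ?_, fun z hz => ?_, fun z hz => ?_⟩
      · rw [hφ.mem_iff]; simp
      · obtain ⟨y, rfl⟩ := hxφ
        exact ⟨-y, by simp⟩
      · have hz' : ℓ (-z) < 0 := by simpa using hz
        have := hc' _ (ne_of_lt hz')
        rw [chartSign_neg hφ hz'] at this
        simpa using this
      · have hz' : 0 < ℓ (-z) := by simpa using hz
        have := hc' _ (ne_of_gt hz')
        rw [chartSign_pos hφ hz'] at this
        simpa using this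

end Gluing

/-! ### Collars -/

section Collar

/-- For `a, b ≥ 0`, the piecewise linear homeomorphism of `ℝ` which is the identity on `[1, ∞)` and
scales `[-a, 1]` onto `[-b, 1]`. -/
noncomputable def stretch (a b r : ℝ) : ℝ := r - max (1 - r) 0 * ((b - a) / (1 + a))

lemma stretch_self (a r : ℝ) : stretch a a r = r := by simp [stretch]

lemma stretch_of_one_le {a b r : ℝ} (hr : 1 ≤ r) : stretch a b r = r := by
  rw [stretch, max_eq_right (by linarith)]; simp

lemma one_sub_stretch {a b r : ℝ} (ha : 0 ≤ a) (hr : r ≤ 1) :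
    1 - stretch a b r = (1 - r) * ((1 + b) / (1 + a)) := by
  rw [stretch, max_eq_left (by linarith)]
  field_simp
  ring

lemma stretch_neg {a b : ℝ} (ha : 0 ≤ a) : stretch a b (-a) = -b := by
  have := one_sub_stretch (b := b) ha (show -a ≤ 1 by linarith)
  have h2 : (1 - -a) * ((1 + b) / (1 + a)) = 1 + b := by field_simp; ring
  linarith

lemma le_stretch {a b r : ℝ} (ha : 0 ≤ a) (hb : 0 ≤ b) (hr : -a ≤ r) : -b ≤ stretch a b r := by
  rcases le_total 1 r with h | h
  · rw [stretch_of_one_le h]; linarith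
  · have h1 := one_sub_stretch (b := b) ha h
    have h2 : (1 - r) * ((1 + b) / (1 + a)) ≤ (1 + a) * ((1 + b) / (1 + a)) :=
      mul_le_mul_of_nonneg_right (by linarith) (by positivity)
    have h3 : (1 + a) * ((1 + b) / (1 + a)) = 1 + b := by field_simp
    linarith

lemma stretch_stretch {a b r : ℝ} (ha : 0 ≤ a) (hb : 0 ≤ b) :
    stretch b a (stretch a b r) = r := by
  rcases le_total 1 r with h | h
  · rw [stretch_of_one_le h, stretch_of_one_le h]
  · have h1 := one_sub_stretch (b := b) ha h
    have h2 : 0 ≤ (1 - r) * ((1 + b) / (1 + a)) := mul_nonneg (by linarith) (by positivity)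
    have h3 := one_sub_stretch (b := a) hb (show stretch a b r ≤ 1 by linarith)
    rw [h1] at h3
    have h4 : (1 - r) * ((1 + b) / (1 + a)) * ((1 + a) / (1 + b)) = 1 - r := by field_simp
    linarith

/-- The subset `D × {0} ∪ {(x, t) | x ∈ S, 0 ≤ t ≤ u x}` of `X × ℝ`: the set `D` with an external
collar of height `u` attached along `S`. -/
def collarSet {X : Type*} (D S : Set X) (u : X → ℝ) : Set (X × ℝ) :=
  {p | (p.1 ∈ D ∧ p.2 = 0) ∨ (p.1 ∈ S ∧ 0 ≤ p.2 ∧ p.2 ≤ u p.1)}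

variable {X V : Type*} [NormedAddCommGroup V] [NormedSpace ℝ V]

/-- Coordinates on an external collar over a chart: `r ≥ 0` is a depth inside `D`, and `r ≤ 0` is
minus the height in the collar. -/
noncomputable def kap (e : V) (φ : V → X) (y : V) (r : ℝ) : X × ℝ :=
  (φ (y + max r 0 • e), max (-r) 0)

/-- Stretching of the external collar of height `u` to height `v`, over a chart `φ` with left
inverse `ψ`, along the lines in direction `e`; the identity outside the chart. -/
noncomputable def collarMove (ℓ : V →L[ℝ] ℝ) (e : V) (φ : V → X) (ψ : X → V) (u v : X → ℝ)
    (p : X × ℝ) : X × ℝ :=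
  open Classical in
  if p.1 ∈ range φ then
    kap e φ (ψ p.1 - ℓ (ψ p.1) • e) (stretch (u (φ (ψ p.1 - ℓ (ψ p.1) • e)))
      (v (φ (ψ p.1 - ℓ (ψ p.1) • e))) (ℓ (ψ p.1) - p.2))
  else p

variable {S D : Set X} {ℓ : V →L[ℝ] ℝ} {e : V} {φ : V → X} {ψ : X → V} {u v : X → ℝ}

/-- In the coordinates `kap`, the map `collarMove` acts by `stretch` on each line. -/
lemma collarMove_kap (he : ℓ e = 1) (hψ : ∀ z, ψ (φ z) = z) {y : V} (hy : ℓ y = 0) (r : ℝ) :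
    collarMove ℓ e φ ψ u v (kap e φ y r) = kap e φ y (stretch (u (φ y)) (v (φ y)) r) := by
  have h1 : ℓ (y + max r 0 • e) = max r 0 := by simp [hy, he]
  have h2 : y + max r 0 • e - max r 0 • e = y := by abel
  have h3 : max r 0 - max (-r) 0 = r := by
    rcases le_total r 0 with h | h
    · rw [max_eq_right h, max_eq_left (by linarith)]; ring
    · rw [max_eq_left h, max_eq_right (by linarith)]; ring
  unfold collarMove
  rw [if_pos ⟨_, rfl⟩]
  simp only [kap, hψ, h1, h2, h3]

variable [TopologicalSpace X]

lemma kap_mem (he : ℓ e = 1) (hφ : FlatChart S ℓ φ) (hD : ∀ z, φ z ∈ D ↔ 0 ≤ ℓ z) {y : V}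
    (hy : ℓ y = 0) {r : ℝ} (hr : -u (φ y) ≤ r) : kap e φ y r ∈ collarSet D S u := by
  unfold kap collarSet
  rcases le_total r 0 with h | h
  · right
    refine ⟨(hφ.mem_iff _).2 ?_, le_max_right _ _, ?_⟩
    · simp [hy, h]
    · simp only [max_eq_right h, zero_smul, add_zero]
      rw [max_eq_left (by linarith)]; linarith
  · left
    refine ⟨(hD _).2 ?_, max_eq_right (by linarith)⟩
    simp [hy, he]

/-- The coordinates `kap` reach every point of the collar over the chart. -/
lemma exists_kap (he : ℓ e = 1) (hφ : FlatChart S ℓ φ) (hD : ∀ z, φ z ∈ D ↔ 0 ≤ ℓ z)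
    (hu : ∀ x, 0 ≤ u x) {p : X × ℝ} (hp : p ∈ collarSet D S u) (hpr : p.1 ∈ range φ) :
    ∃ y r, ℓ y = 0 ∧ -u (φ y) ≤ r ∧ p = kap e φ y r := by
  obtain ⟨x, t⟩ := p
  obtain ⟨z, hz⟩ := hpr
  simp only at hz
  subst hz
  rcases hp with ⟨h1, h2⟩ | ⟨h1, h2, h3⟩
  · simp only at h1 h2
    have hz := (hD z).1 h1
    refine ⟨z - ℓ z • e, ℓ z, by simp [he], by linarith [hu (φ (z - ℓ z • e))], ?_⟩
    simp [kap, hz, h2]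
  · simp only at h1 h2 h3
    have hz := (hφ.mem_iff z).1 h1
    refine ⟨z, -t, hz, by linarith, ?_⟩
    simp [kap, h2]

lemma collarMove_leftInv (he : ℓ e = 1) (hφ : FlatChart S ℓ φ) (hD : ∀ z, φ z ∈ D ↔ 0 ≤ ℓ z)
    (hψ : ∀ z, ψ (φ z) = z) (hu : ∀ x, 0 ≤ u x) (hv : ∀ x, 0 ≤ v x) {p : X × ℝ}
    (hp : p ∈ collarSet D S u) :
    collarMove ℓ e φ ψ v u (collarMove ℓ e φ ψ u v p) = p := by
  by_cases hpr : p.1 ∈ range φ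
  · obtain ⟨y, r, hy, hr, rfl⟩ := exists_kap he hφ hD hu hp hpr
    rw [collarMove_kap he hψ hy, collarMove_kap he hψ hy, stretch_stretch (hu _) (hv _)]
  · have : ∀ u v, collarMove ℓ e φ ψ u v p = p := fun u v => by
      unfold collarMove; rw [if_neg hpr]
    rw [this, this]

lemma collarMove_mapsTo (he : ℓ e = 1) (hφ : FlatChart S ℓ φ) (hD : ∀ z, φ z ∈ D ↔ 0 ≤ ℓ z)
    (hψ : ∀ z, ψ (φ z) = z) (hu : ∀ x, 0 ≤ u x) (hv : ∀ x, 0 ≤ v x)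
    (huv : ∀ x, x ∉ range φ → u x = v x) :
    MapsTo (collarMove ℓ e φ ψ u v) (collarSet D S u) (collarSet D S v) := by
  intro p hp
  by_cases hpr : p.1 ∈ range φ
  · obtain ⟨y, r, hy, hr, rfl⟩ := exists_kap he hφ hD hu hp hpr
    rw [collarMove_kap he hψ hy]
    exact kap_mem he hφ hD hy (le_stretch (hu _) (hv _) hr)
  · unfold collarMove
    rw [if_neg hpr]
    unfold collarSet at hp ⊢
    rwa [mem_ofPred_eq, ← huv _ hpr]

lemma collarMove_continuousOn [T2Space X] (he : ℓ e = 1) (hφ : FlatChart S ℓ φ)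
    (hD : ∀ z, φ z ∈ D ↔ 0 ≤ ℓ z)
    (hψ : ∀ z, ψ (φ z) = z) (hψc : ContinuousOn ψ (range φ)) (hu : ∀ x, 0 ≤ u x)
    (huc : Continuous u) (hvc : Continuous v) {C : Set V} (hC : IsCompact C)
    (huv : ∀ z, u (φ z) ≠ v (φ z) → z ∈ C) :
    ContinuousOn (collarMove ℓ e φ ψ u v) (collarSet D S u) := by
  intro p hp
  by_cases hpr : p.1 ∈ range φ
  · refine ContinuousAt.continuousWithinAt ?_
    have hψp : ContinuousAt (fun q : X × ℝ => ψ q.1) p :=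
      ContinuousAt.comp (f := Prod.fst) (hψc.continuousAt (hφ.emb.isOpen_range.mem_nhds hpr))
        continuousAt_fst
    have hopen : ∀ᶠ q : X × ℝ in 𝓝 p, q.1 ∈ range φ :=
      continuousAt_fst.preimage_mem_nhds (hφ.emb.isOpen_range.mem_nhds hpr)
    refine ContinuousAt.congr (f := fun p : X × ℝ =>
      kap e φ (ψ p.1 - ℓ (ψ p.1) • e) (stretch (u (φ (ψ p.1 - ℓ (ψ p.1) • e)))
      (v (φ (ψ p.1 - ℓ (ψ p.1) • e))) (ℓ (ψ p.1) - p.2))) ?_ ?_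
    · have hb : ContinuousAt (fun q : V × ℝ =>
          kap e φ (q.1 - ℓ q.1 • e) (stretch (u (φ (q.1 - ℓ q.1 • e)))
            (v (φ (q.1 - ℓ q.1 • e))) (ℓ q.1 - q.2))) (ψ p.1, p.2) := by
        have hφc := hφ.emb.continuous
        have : Continuous (fun q : V × ℝ =>
          kap e φ (q.1 - ℓ q.1 • e) (stretch (u (φ (q.1 - ℓ q.1 • e)))
            (v (φ (q.1 - ℓ q.1 • e))) (ℓ q.1 - q.2))) := by
          unfold kap stretch
          have hne : ∀ q : V × ℝ, 1 + u (φ (q.1 - ℓ q.1 • e)) ≠ 0 := fun q => by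
            have := hu (φ (q.1 - ℓ q.1 • e)); linarith
          fun_prop (disch := exact hne _)
        exact this.continuousAt
      exact ContinuousAt.comp (f := fun q : X × ℝ => (ψ q.1, q.2)) hb
        (hψp.prodMk continuousAt_snd)
    · filter_upwards [hopen] with q hq
      unfold collarMove
      rw [if_pos hq]
  · -- Near a point outside the chart the map is the identity, its support being compact.
    have hK : IsClosed (φ '' ((fun q : V × ℝ => q.1 + q.2 • e) '' (C ×ˢ Icc 0 1))) := by
      refine IsCompact.isClosed (IsCompact.image (IsCompact.image (hC.prod isCompact_Icc) ?_)
        hφ.emb.continuous)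
      fun_prop
    have hpK : p.1 ∉ φ '' ((fun q : V × ℝ => q.1 + q.2 • e) '' (C ×ˢ Icc 0 1)) := by
      rintro ⟨z, -, hz⟩
      exact hpr ⟨z, hz⟩
    have hid : ∀ q ∈ collarSet D S u,
        q.1 ∉ φ '' ((fun q : V × ℝ => q.1 + q.2 • e) '' (C ×ˢ Icc 0 1)) →
        collarMove ℓ e φ ψ u v q = q := by
      intro q hq hqK
      by_cases hqr : q.1 ∈ range φ
      · obtain ⟨y, r, hy, hr, rfl⟩ := exists_kap he hφ hD hu hq hqr
        rw [collarMove_kap he hψ hy]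
        congr 1
        by_cases h : u (φ y) = v (φ y)
        · rw [h, stretch_self]
        · refine stretch_of_one_le ?_
          by_contra hr1
          refine hqK ⟨_, ⟨(y, max r 0), ⟨huv _ h, le_max_right _ _, ?_⟩, rfl⟩, rfl⟩
          exact max_le (by linarith) zero_le_one
      · unfold collarMove; rw [if_neg hqr]
    have : ContinuousWithinAt id (collarSet D S u) p := continuousWithinAt_id
    refine this.congr_of_eventuallyEq ?_ (hid p hp hpK)
    filter_upwards [self_mem_nhdsWithin, mem_nhdsWithin_of_mem_nhds
      (continuousAt_fst.preimage_mem_nhds (hK.isOpen_compl.mem_nhds hpK))] with q h1 h2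
    exact hid q h1 h2

/-- `D` can be stretched homeomorphically onto itself with an external collar of height `u`
attached, each point of `S` being pushed to the top of the collar above it. -/
def Attachable (D S : Set X) (u : X → ℝ) : Prop :=
  Continuous u ∧ (∀ x, 0 ≤ u x) ∧ (∀ x, u x ≤ 1) ∧ ∃ H : X → X × ℝ, ContinuousOn H D ∧
    BijOn H D (collarSet D S u) ∧ ∀ x ∈ S, H x = (x, u x)

/-- The height of the collar may be changed over a compact part of one chart. -/
lemma attachable_step [T2Space X] (he : ℓ e = 1) (hφ : FlatChart S ℓ φ)
    (hD : ∀ z, φ z ∈ D ↔ 0 ≤ ℓ z) (hu : Attachable D S u) (hvc : Continuous v)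
    (hv : ∀ x, 0 ≤ v x) (hv1 : ∀ x, v x ≤ 1) {C : Set V} (hC : IsCompact C)
    (huv : ∀ z, u (φ z) ≠ v (φ z) → z ∈ C) (huv' : ∀ x, x ∉ range φ → u x = v x) :
    Attachable D S v := by
  obtain ⟨huc, hu0, hu1, H, hHc, hHb, hHS⟩ := hu
  let ψ : X → V := (hφ.emb.toOpenPartialHomeomorph φ).symm
  have hψ : ∀ z, ψ (φ z) = z := fun z =>
    (hφ.emb.toOpenPartialHomeomorph φ).left_inv (by simp)
  have hψc : ContinuousOn ψ (range φ) := by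
    have := (hφ.emb.toOpenPartialHomeomorph φ).continuousOn_symm
    simpa using this
  refine ⟨hvc, hv, hv1, fun x => collarMove ℓ e φ ψ u v (H x), ?_, ?_, ?_⟩
  · exact (collarMove_continuousOn he hφ hD hψ hψc hu0 huc hvc hC huv).comp hHc hHb.mapsTo
  · refine BijOn.comp (g := collarMove ℓ e φ ψ u v) (t := collarSet D S u) ?_ hHb
    refine BijOn.mk (collarMove_mapsTo he hφ hD hψ hu0 hv huv') ?_ ?_
    · exact LeftInvOn.injOn (f₁' := collarMove ℓ e φ ψ v u)
        (fun p hp => collarMove_leftInv he hφ hD hψ hu0 hv hp)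
    · intro p hp
      exact ⟨_, collarMove_mapsTo he hφ hD hψ hv hu0 (fun x hx => (huv' x hx).symm) hp,
        collarMove_leftInv he hφ hD hψ hv hu0 hp⟩
  · intro x hx
    simp only
    rw [hHS x hx]
    by_cases hxr : x ∈ range φ
    · obtain ⟨y, rfl⟩ := hxr
      have hy := (hφ.mem_iff y).1 hx
      have hk : ∀ w : X → ℝ, (∀ x, 0 ≤ w x) → (φ y, w (φ y)) = kap e φ y (-w (φ y)) := by
        intro w hw
        simp [kap, hw]
      rw [hk u hu0, hk v hv, collarMove_kap he hψ hy, stretch_neg (hu0 _)]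
    · unfold collarMove
      rw [if_neg hxr, huv' x hxr]

/-- A compact locally flat boundary admits a collar: `D` is homeomorphic, by a map pushing `S`
outwards, to `D` with an external collar of height one. The height is raised over one chart at a
time. -/
lemma exists_collar [T2Space X] [CompactSpace X] [ProperSpace V] (he : ℓ e = 1)
    (hS : IsClosed S) (hSD : S ⊆ D)
    (hch : ∀ x ∈ S, ∃ φ : V → X, FlatChart S ℓ φ ∧ x ∈ range φ ∧ ∀ z, φ z ∈ D ↔ 0 ≤ ℓ z) :
    ∃ u, Attachable D S u ∧ ∀ x ∈ S, u x = 1 := by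
  have h0 : Attachable D S (fun _ => 0) := by
    refine ⟨continuous_const, fun _ => le_rfl, fun _ => zero_le_one, fun x => (x, 0),
      by fun_prop, BijOn.mk ?_ ?_ ?_, fun _ _ => rfl⟩
    · intro x hx
      exact Or.inl ⟨hx, rfl⟩
    · intro x _ y _ h
      exact (Prod.ext_iff.1 h).1
    · rintro ⟨x, t⟩ (⟨h1, h2⟩ | ⟨h1, h2, h3⟩)
      · exact ⟨x, h1, Prod.ext rfl h2.symm⟩
      · exact ⟨x, hSD h1, Prod.ext rfl (le_antisymm h2 h3)⟩
  have main : ∀ u, Attachable D S u → ∃ v, Attachable D S v ∧ (∀ x, u x ≤ v x) ∧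
      ∀ x ∈ S, v x = 1 := by
    refine hS.isCompact.induction_on (p := fun T => ∀ u, Attachable D S u →
      ∃ v, Attachable D S v ∧ (∀ x, u x ≤ v x) ∧ ∀ x ∈ T, v x = 1) ?_ ?_ ?_ ?_
    · intro u hu
      exact ⟨u, hu, fun _ => le_rfl, fun x hx => absurd hx (notMem_empty x)⟩
    · intro s t hst h u hu
      obtain ⟨v, hv, huv, hv1⟩ := h u hu
      exact ⟨v, hv, huv, fun x hx => hv1 x (hst hx)⟩
    · intro s t hs ht u hu
      obtain ⟨v, hv, huv, hv1⟩ := hs u hu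
      obtain ⟨w, hw, hvw, hw1⟩ := ht v hv
      refine ⟨w, hw, fun x => (huv x).trans (hvw x), ?_⟩
      rintro x (hx | hx)
      · exact le_antisymm (hw.2.2.1 x) (by have := hvw x; rw [hv1 x hx] at this; exact this)
      · exact hw1 x hx
    · intro x hx
      obtain ⟨φ, hφ, ⟨y, rfl⟩, hD⟩ := hch x hx
      refine ⟨φ '' Metric.ball y 1, mem_nhdsWithin_of_mem_nhds
        (hφ.emb.isOpenMap.image_mem_nhds (Metric.ball_mem_nhds y one_pos)), fun u hu => ?_⟩
      obtain ⟨lam, hl0, hl1, hl⟩ := exists_continuous_zero_one_of_isClosed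
        (hφ.emb.isOpenMap _ (Metric.isOpen_ball (x := y) (ε := 2))).isClosed_compl
        ((isCompact_closedBall y 1).image hφ.emb.continuous).isClosed (by
          rw [disjoint_compl_left_iff_subset]
          exact image_mono (Metric.closedBall_subset_ball (by norm_num)))
      obtain ⟨huc, hu0, hu1, -⟩ := id hu
      refine ⟨fun x => max (u x) (lam x), attachable_step he hφ hD hu (by fun_prop)
        (fun x => (hu0 x).trans (le_max_left _ _)) (fun x => max_le (hu1 x) (hl x).2)
        (isCompact_closedBall y 2) ?_ ?_, fun x => le_max_left _ _, ?_⟩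
      · intro z hz
        by_contra hzb
        apply hz
        have : lam (φ z) = 0 := hl0 (by
          rintro ⟨w, hw, hwz⟩
          rw [hφ.emb.injective hwz] at hw
          exact hzb (Metric.ball_subset_closedBall hw))
        rw [this, max_eq_left (hu0 _)]
      · intro x hx
        have : lam x = 0 := hl0 (by
          rintro ⟨w, hw, hwz⟩
          exact hx ⟨w, hwz⟩)
        simp only [this, max_eq_left (hu0 _)]
      · intro x hx
        have : lam x = 1 := hl1 (image_mono Metric.ball_subset_closedBall hx)
        simp only [this, max_eq_right (hu1 _)]
  obtain ⟨v, hv, -, hv1⟩ := main _ h0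
  exact ⟨v, hv, hv1⟩

/-- Each side of `S` maps onto the unit ball so that `S` goes homeomorphically to the unit sphere
by a given map `σ` and only the fibre of the centre may fail to be a single point: all of the side
except an open collar of `S` goes to the centre. -/
lemma exists_collapse [T2Space X] [CompactSpace X] [ProperSpace V] (he : ℓ e = 1)
    (hS : IsClosed S) {E : Type*} [NormedAddCommGroup E] [NormedSpace ℝ E] [FiniteDimensional ℝ E]
    (hSne : S.Nonempty) (σ : S ≃ₜ Metric.sphere (0 : E) 1) {P N : Set X} (hPN : Disjoint P N)
    (hcov : P ∪ N = Sᶜ)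
    (hch : ∀ x ∈ S, ∃ φ : V → X, FlatChart S ℓ φ ∧ x ∈ range φ ∧
        (∀ z, 0 < ℓ z → φ z ∈ P) ∧ (∀ z, ℓ z < 0 → φ z ∈ N)) :
    ∃ f : X → E, ContinuousOn f (P ∪ S) ∧ (∀ x : S, f x = σ x) ∧ (∀ x ∈ P, ‖f x‖ < 1) ∧
      (∀ x ∈ P ∪ S, ∀ x' ∈ P ∪ S, f x = f x' → f x ≠ 0 → x = x') ∧
      SurjOn f (P ∪ S) (Metric.closedBall 0 1) := by
  have hPS : ∀ x ∈ P, x ∉ S := fun x hx hxS => by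
    have : x ∈ Sᶜ := hcov ▸ Or.inl hx
    exact this hxS
  have hNS : ∀ x ∈ N, x ∉ S := fun x hx hxS => by
    have : x ∈ Sᶜ := hcov ▸ Or.inr hx
    exact this hxS
  obtain ⟨u, ⟨huc, hu0, hu1, H, hHc, hHb, hHS⟩, hu⟩ := exists_collar (D := P ∪ S) he hS
    subset_union_right (by
      intro x hx
      obtain ⟨φ, hφ, hxφ, h1, h2⟩ := hch x hx
      refine ⟨φ, hφ, hxφ, fun z => ⟨fun hz => ?_, fun hz => ?_⟩⟩
      · by_contra hlt
        have hN := h2 z (not_le.1 hlt)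
        rcases hz with hz | hz
        · exact Set.disjoint_left.1 hPN hz hN
        · exact hNS _ hN hz
      · rcases hz.eq_or_lt with h | h
        · exact Or.inr ((hφ.mem_iff z).2 h.symm)
        · exact Or.inl (h1 z h))
  obtain ⟨g, hg⟩ := ContinuousMap.exists_restrict_eq hS
    (⟨fun x => (σ x : E), by fun_prop⟩ : C(S, E))
  have hg' : ∀ x : S, g x = σ x := fun x => DFunLike.congr_fun hg x
  have hgn : ∀ x ∈ S, ‖g x‖ = 1 := fun x hx => by
    rw [hg' ⟨x, hx⟩]; simp
  -- Height `t` in the collar becomes distance `t` from the centre.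
  have hn : ∀ p ∈ collarSet (P ∪ S) S u, ‖p.2 • g p.1‖ = p.2 := by
    rintro ⟨x, t⟩ (⟨h1, h2⟩ | ⟨h1, h2, h3⟩)
    · simp only at h2; simp [h2]
    · simp only at h1 h2 ⊢
      rw [norm_smul, hgn x h1, Real.norm_of_nonneg h2, mul_one]
  refine ⟨fun x => (H x).2 • g (H x).1, ?_, ?_, ?_, ?_, ?_⟩
  · exact (continuous_snd.comp_continuousOn hHc).smul
      (g.continuous.comp_continuousOn (continuous_fst.comp_continuousOn hHc))
  · intro x
    simp only [hHS x x.2, hu x x.2, one_smul, hg']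
  · intro x hx
    have hx' : x ∈ P ∪ S := Or.inl hx
    have hm := hHb.mapsTo hx'
    simp only
    rw [hn _ hm]
    rcases hm with ⟨h1, h2⟩ | ⟨h1, h2, h3⟩
    · rw [h2]; exact one_pos
    · rw [hu _ h1] at h3
      refine lt_of_le_of_ne h3 fun h => ?_
      have h4 := hHS _ h1
      rw [hu _ h1, ← h] at h4
      have := hHb.injOn hx' (Or.inr h1) h4.symm
      exact hPS x hx (this ▸ h1)
  · intro x hx x' hx' h hne
    have hm := hHb.mapsTo hx
    have hm' := hHb.mapsTo hx'
    have hnn := hn _ hm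
    beta_reduce at h hne
    rw [h, hn _ hm'] at hnn
    have ht : (H x).2 ≠ 0 := fun h0 => hne (by rw [h0, zero_smul])
    have h1 : (H x).1 ∈ S := by
      rcases hm with ⟨_, h2⟩ | ⟨h1, _⟩
      · exact absurd h2 ht
      · exact h1
    have h1' : (H x').1 ∈ S := by
      rcases hm' with ⟨_, h2⟩ | ⟨h1, _⟩
      · exact absurd h2 (hnn ▸ ht)
      · exact h1
    rw [hnn] at h
    have h3 := smul_right_injective E ht h
    beta_reduce at h3
    rw [hg' ⟨_, h1⟩, hg' ⟨_, h1'⟩] at h3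
    have h4 := congrArg Subtype.val (σ.injective (Subtype.ext h3))
    exact hHb.injOn hx hx' (Prod.ext h4 hnn.symm)
  · intro w hw
    rw [mem_closedBall_zero_iff] at hw
    by_cases hw0 : w = 0
    · obtain ⟨x, hx⟩ := hSne
      obtain ⟨a, ha, ha'⟩ := hHb.surjOn (show (x, (0 : ℝ)) ∈ collarSet (P ∪ S) S u from
        Or.inl ⟨Or.inr hx, rfl⟩)
      refine ⟨a, ha, ?_⟩
      simp only [ha', hw0, zero_smul]
    · have hwn : ‖w‖ ≠ 0 := norm_ne_zero_iff.2 hw0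
      let s : Metric.sphere (0 : E) 1 := ⟨‖w‖⁻¹ • w, by
        rw [mem_sphere_zero_iff_norm, norm_smul, norm_inv, norm_norm, inv_mul_cancel₀ hwn]⟩
      obtain ⟨a, ha, ha'⟩ := hHb.surjOn (show ((σ.symm s : X), ‖w‖) ∈ collarSet (P ∪ S) S u from
        Or.inr ⟨(σ.symm s).2, norm_nonneg _, by rw [hu _ (σ.symm s).2]; exact hw⟩)
      refine ⟨a, ha, ?_⟩
      simp only [ha', hg']
      rw [σ.apply_symm_apply]
      simp [s, smul_smul, mul_inv_cancel₀ hwn]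

end Collar

/-! ### Cellularity of fibres -/

lemma min_pos_of_lt {R r : ℝ} (hR : 0 < R) (hr : r < R) : 0 < min 1 (2 * (R - r) / R) := by
  refine lt_min one_pos (div_pos (by linarith) hR)

section Shrink

variable {E : Type*} [NormedAddCommGroup E] [NormedSpace ℝ E]

/-- A radial embedding of the whole space onto the open ball of radius `R`, which is the identity
on the ball of radius `R / 2` and sends radius `r ≥ R / 2` to `R - R ^ 2 / (4 * r)`. -/
noncomputable def shr (R : ℝ) (v : E) : E :=
  (1 - (1 - R / (2 * max ‖v‖ (R / 2))) ^ 2) • v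

/-- The inverse of `shr R` on the open ball of radius `R`. -/
noncomputable def unshr (R : ℝ) (w : E) : E :=
  (1 - (1 - min 1 (2 * (R - ‖w‖) / R)) ^ 2)⁻¹ • w

variable {R : ℝ}

lemma continuous_shr (hR : 0 < R) : Continuous (shr R : E → E) := by
  unfold shr
  have : ∀ v : E, 2 * max ‖v‖ (R / 2) ≠ 0 := fun v => by positivity
  fun_prop (disch := exact this _)

lemma shr_eq_self (hR : 0 < R) {v : E} (hv : ‖v‖ ≤ R / 2) : shr R v = v := by
  unfold shr
  rw [max_eq_right hv]
  have : R / (2 * (R / 2)) = 1 := by field_simp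
  rw [this]; simp

lemma norm_shr (hR : 0 < R) {v : E} (hv : R / 2 ≤ ‖v‖) : R - ‖shr R v‖ = R ^ 2 / (4 * ‖v‖) := by
  have hv0 : 0 < ‖v‖ := by linarith
  unfold shr
  rw [max_eq_left hv, norm_smul, Real.norm_of_nonneg]
  · field_simp; ring
  · have h1 : R / (2 * ‖v‖) ≤ 1 := by rw [div_le_one (by positivity)]; linarith
    have h2 : 0 ≤ R / (2 * ‖v‖) := by positivity
    nlinarith

lemma norm_shr_lt (hR : 0 < R) (v : E) : ‖shr R v‖ < R := by
  rcases le_total ‖v‖ (R / 2) with h | h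
  · rw [shr_eq_self hR h]; linarith
  · have hv0 : 0 < ‖v‖ := by linarith
    have := norm_shr hR h
    have h2 : 0 < R ^ 2 / (4 * ‖v‖) := by positivity
    linarith

lemma unshr_shr (hR : 0 < R) (v : E) : unshr R (shr R v) = v := by
  rcases le_total ‖v‖ (R / 2) with h | h
  · rw [shr_eq_self hR h]
    unfold unshr
    rw [min_eq_left]
    · simp
    · rw [le_div_iff₀ hR]; linarith
  · have hv0 : 0 < ‖v‖ := by linarith
    have hs : 2 * (R - ‖shr R v‖) / R = R / (2 * ‖v‖) := by
      rw [norm_shr hR h]; field_simp; norm_num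
    have h1 : R / (2 * ‖v‖) ≤ 1 := by rw [div_le_one (by positivity)]; linarith
    have h2 : 0 < R / (2 * ‖v‖) := by positivity
    unfold unshr
    rw [hs, min_eq_right h1]
    unfold shr
    rw [max_eq_left h, smul_smul, inv_mul_cancel₀, one_smul]
    nlinarith

lemma shr_unshr (hR : 0 < R) {w : E} (hw : ‖w‖ < R) : shr R (unshr R w) = w := by
  rcases le_total ‖w‖ (R / 2) with h | h
  · have : unshr R w = w := by
      unfold unshr
      rw [min_eq_left]
      · simp
      · rw [le_div_iff₀ hR]; linarith
    rw [this, shr_eq_self hR h]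
  · have hw0 : 0 < ‖w‖ := by linarith
    have h1 : 2 * (R - ‖w‖) / R ≤ 1 := by rw [div_le_one hR]; linarith
    have h2 : 0 < 2 * (R - ‖w‖) / R := div_pos (by linarith) hR
    have h3 : 0 < 1 - (1 - 2 * (R - ‖w‖) / R) ^ 2 := by nlinarith
    have h4 : unshr R w = (1 - (1 - 2 * (R - ‖w‖) / R) ^ 2)⁻¹ • w := by
      unfold unshr; rw [min_eq_right h1]
    have hRw : R - ‖w‖ ≠ 0 := by linarith
    have h5 : ‖unshr R w‖ = R ^ 2 / (4 * (R - ‖w‖)) := by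
      rw [h4, norm_smul, Real.norm_of_nonneg (by positivity)]
      rw [inv_mul_eq_div, div_eq_div_iff h3.ne' (by positivity)]
      field_simp
      ring
    have h6 : R / (2 * ‖unshr R w‖) = 2 * (R - ‖w‖) / R := by
      rw [h5]; field_simp; norm_num
    have h7 : R / 2 ≤ ‖unshr R w‖ := by
      rw [h5, div_le_div_iff₀ (by norm_num) (by nlinarith)]
      nlinarith
    unfold shr
    rw [max_eq_left h7, h6, h4, smul_smul, mul_inv_cancel₀ h3.ne', one_smul]

lemma continuousAt_unshr (hR : 0 < R) {w : E} (hw : ‖w‖ < R) : ContinuousAt (unshr R) w := by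
  unfold unshr
  have h1 := min_pos_of_lt hR hw
  have h2 : min 1 (2 * (R - ‖w‖) / R) ≤ 1 := min_le_left _ _
  have h3 : 1 - (1 - min 1 (2 * (R - ‖w‖) / R)) ^ 2 ≠ 0 := by nlinarith
  refine ContinuousAt.smul (ContinuousAt.inv₀ ?_ h3) continuousAt_id
  fun_prop (disch := exact hR.ne')

end Shrink

/-- A map is open at `x` if it sends neighborhoods of `x` to neighborhoods of its value. -/
def OpenAt {X Y : Type*} [TopologicalSpace X] [TopologicalSpace Y] (f : X → Y) (x : X) : Prop :=
  𝓝 (f x) ≤ map f (𝓝 x)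

lemma openAt_of_rightInv {X Y : Type*} [TopologicalSpace X] [TopologicalSpace Y] {f : X → Y}
    {x : X} {k : Y → X} (hk : ContinuousAt k (f x)) (hkx : k (f x) = x)
    (hfk : ∀ᶠ y in 𝓝 (f x), f (k y) = y) : OpenAt f x := by
  unfold OpenAt
  have h1 : map (fun y => f (k y)) (𝓝 (f x)) = 𝓝 (f x) := by
    rw [map_congr hfk]; exact map_id
  have h2 : map k (𝓝 (f x)) ≤ 𝓝 x := by
    have := hk.tendsto
    rwa [hkx] at this
  calc 𝓝 (f x) = map f (map k (𝓝 (f x))) := by rw [map_map]; exact h1.symm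
    _ ≤ map f (𝓝 x) := map_mono h2

lemma OpenAt.comp {X Y Z : Type*} [TopologicalSpace X] [TopologicalSpace Y] [TopologicalSpace Z]
    {f : X → Y} {g : Y → Z} {x : X} (hg : OpenAt g (f x)) (hf : OpenAt f x) :
    OpenAt (fun x => g (f x)) x := by
  unfold OpenAt at *
  calc 𝓝 (g (f x)) ≤ map g (𝓝 (f x)) := hg
    _ ≤ map g (map f (𝓝 x)) := map_mono hf
    _ = _ := by rw [map_map]; rfl

/-- For every neighborhood `V` of a point `q` of a normed space, the space embeds openly into `V`
by a map which is the identity near `q`. -/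
lemma exists_shrink {E : Type*} [NormedAddCommGroup E] [NormedSpace ℝ E] {q : E} {V : Set E}
    (hV : V ∈ 𝓝 q) : ∃ h : E → E, Continuous h ∧ Function.Injective h ∧ (∀ y, h y ∈ V) ∧
      (∀ y, OpenAt h y) ∧ ∀ᶠ y in 𝓝 q, h y = y := by
  obtain ⟨R, hR, hRV⟩ := Metric.mem_nhds_iff.1 hV
  have hc := continuous_shr (E := E) hR
  refine ⟨fun y => q + shr R (y - q), by fun_prop, ?_, ?_, ?_, ?_⟩
  · intro y y' h
    have := congrArg (unshr R) (add_left_cancel h)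
    rw [unshr_shr hR, unshr_shr hR] at this
    exact sub_left_injective this
  · intro y
    apply hRV
    simpa using norm_shr_lt hR (y - q)
  · intro y
    refine openAt_of_rightInv (k := fun w => q + unshr R (w - q)) ?_ ?_ ?_
    · have h1 : ContinuousAt (unshr R) (q + shr R (y - q) - q) := by
        apply continuousAt_unshr hR
        simpa using norm_shr_lt hR (y - q)
      refine continuousAt_const.add (ContinuousAt.comp (f := fun w => w - q) h1 (by fun_prop))
    · simp [unshr_shr hR]
    · have : ∀ᶠ w in 𝓝 (q + shr R (y - q)), w ∈ Metric.ball q R :=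
        Metric.isOpen_ball.mem_nhds (by simpa using norm_shr_lt hR (y - q))
      filter_upwards [this] with w hw
      rw [mem_ball_iff_norm] at hw
      simp [shr_unshr hR hw]
  · filter_upwards [Metric.closedBall_mem_nhds q (half_pos hR)] with y hy
    rw [mem_closedBall_iff_norm] at hy
    rw [shr_eq_self hR hy]; abel

/-- Brown's device: if `f` is a local homeomorphism over a punctured neighborhood of `q`, the
shrinking embedding `h` of the target lifts through `f` to a self-map `g` of the source that is
the identity near the fibre of `q`. -/
lemma exists_lift_shrink {Ω E : Type*} [TopologicalSpace Ω] [NormedAddCommGroup E]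
    [NormedSpace ℝ E] {f : Ω → E} (hf : Continuous f) {q : E} {V : Set E} (hV : V ∈ 𝓝 q)
    (ha : ∀ y ∈ V, ∃ x, f x = y)
    (hb : ∀ x x', f x ∈ V → f x ≠ q → f x = f x' → x = x')
    (hc : ∀ x, f x ∈ V → f x ≠ q → OpenAt f x) :
    ∃ (h : E → E) (g : Ω → Ω), Continuous g ∧ (∀ x, f (g x) = h (f x)) ∧ Function.Injective h ∧
      h q = q ∧ (∀ y, OpenAt h y) ∧ (∀ y, h y ∈ V) ∧ (∀ x, f x = q → g x = x) ∧
      (∀ x, (OpenAt f x ∨ f x = q) → OpenAt g x) := by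
  classical
  obtain ⟨h, hhc, hhi, hhV, hho, hhq⟩ := exists_shrink hV
  have : Nonempty Ω := ⟨(ha q (mem_of_mem_nhds hV)).choose⟩
  choose! k hk using ha
  have hqq : h q = q := hhq.self_of_nhds
  have hne : ∀ y, y ≠ q → h y ≠ q := fun y hy h' => hy (hhi (h'.trans hqq.symm))
  have hkf : ∀ x, f x ∈ V → f x ≠ q → k (f x) = x := fun x hx hxq =>
    (hb x _ hx hxq (hk _ hx).symm).symm
  obtain ⟨W, hWsub, hWo, hqW⟩ := mem_nhds_iff.1 (Filter.inter_mem hhq hV)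
  let g : Ω → Ω := fun x => if f x ∈ W then x else k (h (f x))
  have hg1 : ∀ x, f x ∈ W → g x = x := fun x hx => if_pos hx
  have hg2 : ∀ x, f x ≠ q → g x = k (h (f x)) := by
    intro x hx
    by_cases hxW : f x ∈ W
    · have h1 : h (f x) = f x := (hWsub hxW).1
      rw [hg1 x hxW, h1, hkf x (hWsub hxW).2 hx]
    · exact if_neg hxW
  have hgid : ∀ x, f x = q → ∀ᶠ x' in 𝓝 x, g x' = x' := by
    intro x hx
    filter_upwards [hf.continuousAt.preimage_mem_nhds (hWo.mem_nhds (hx ▸ hqW : f x ∈ W))] with a ha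
    exact hg1 a ha
  have hgk : ∀ x, f x ≠ q → ∀ᶠ x' in 𝓝 x, g x' = k (h (f x')) := by
    intro x hx
    filter_upwards [hf.continuousAt.preimage_mem_nhds (isOpen_ne.mem_nhds hx)] with a ha
    exact hg2 a ha
  -- `V` is a neighborhood of every value of `h`, since `h` is open with values in `V`.
  have hVn : ∀ y, V ∈ 𝓝 (h y) := by
    intro y
    refine Filter.mem_of_superset (hho y (Filter.image_mem_map univ_mem)) ?_
    rintro _ ⟨z, -, rfl⟩
    exact hhV z
  have hkc : ∀ y, y ≠ q → ContinuousAt k (h y) := by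
    intro y hy N hN
    rw [mem_map]
    have h1 : OpenAt f (k (h y)) := hc _ (by rw [hk _ (hhV y)]; exact hhV y)
      (by rw [hk _ (hhV y)]; exact hne y hy)
    have h2 : f '' N ∈ 𝓝 (h y) := by
      have := h1 (Filter.image_mem_map hN)
      rwa [hk _ (hhV y)] at this
    filter_upwards [h2, hVn y, isOpen_ne.mem_nhds (hne y hy)] with w h3 h4 h5
    obtain ⟨x, hx, rfl⟩ := h3
    rw [mem_preimage, hkf x h4 h5]
    exact hx
  refine ⟨h, g, ?_, ?_, hhi, hqq, hho, hhV, ?_, ?_⟩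
  · rw [continuous_iff_continuousAt]
    intro x
    by_cases hx : f x = q
    · exact continuousAt_id.congr ((hgid x hx).mono fun _ h => h.symm)
    · refine ContinuousAt.congr ?_ ((hgk x hx).mono fun _ h => h.symm)
      exact ContinuousAt.comp (f := fun x => h (f x)) (hkc _ hx) (hhc.comp hf).continuousAt
  · intro x
    by_cases hx : f x = q
    · rw [hg1 x (hx ▸ hqW), hx, hqq]
    · rw [hg2 x hx, hk _ (hhV _)]
  · intro x hx
    exact hg1 x (hx ▸ hqW)
  · intro x hx
    by_cases hxq : f x = q
    · unfold OpenAt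
      rw [map_congr (hgid x hxq), map_id', (hgid x hxq).self_of_nhds]
    · have hfo := hx.resolve_right hxq
      have hko : OpenAt k (h (f x)) := by
        refine openAt_of_rightInv (k := f) hf.continuousAt (hk _ (hhV _)) ?_
        have h1 : f (k (h (f x))) = h (f x) := hk _ (hhV _)
        filter_upwards [hf.continuousAt.preimage_mem_nhds (h1.symm ▸ hVn (f x)),
          hf.continuousAt.preimage_mem_nhds (h1.symm ▸ isOpen_ne.mem_nhds (hne _ hxq))] with a h2 h3
        exact hkf a h2 h3
      have := (OpenAt.comp (f := fun x => h (f x)) hko (OpenAt.comp (hho _) hfo))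
      unfold OpenAt at this ⊢
      rwa [map_congr (hgk x hxq), (hgk x hxq).self_of_nhds]

section Cellular

variable {X Y : Type*} [TopologicalSpace X] [CompactSpace X] [TopologicalSpace Y] [T2Space Y]

lemma image_mem_nhds_of_fiber {F : X → Y} (hF : Continuous F) (hs : Function.Surjective F) {y : Y}
    {U : Set X} (hU : IsOpen U) (h : ∀ x, F x = y → x ∈ U) : F '' U ∈ 𝓝 y := by
  have h1 : IsClosed (F '' Uᶜ) := (hU.isClosed_compl.isCompact.image hF).isClosed
  refine Filter.mem_of_superset (h1.isOpen_compl.mem_nhds ?_) ?_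
  · rintro ⟨x, hx, hxy⟩
    exact hx (h x hxy)
  · intro z hz
    obtain ⟨x, rfl⟩ := hs z
    by_contra hxU
    exact hz ⟨x, fun hx => hxU ⟨x, hx, rfl⟩, rfl⟩

variable [T2Space X]

/-- Brown's cellularity theorem. Let `F` be a map between spaces which become normed spaces on
removing the points `x₀` and `y₀ = F x₀`, with at most two nondegenerate fibres, those of `p` and
`q`. Then the fibre of `p` has arbitrarily small neighborhoods that are open cells. Shrinking
towards `q` gives a self-map whose only nondegenerate fibre is that of `p`; shrinking again,
towards its value there, gives an embedding. -/
lemma exists_cell {E E' : Type*} [NormedAddCommGroup E] [NormedSpace ℝ E] [NormedAddCommGroup E']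
    [NormedSpace ℝ E'] {F : X → Y} (hF : Continuous F) (hs : Function.Surjective F) {p q : Y}
    (hpq : p ≠ q) (hinj : ∀ x x', F x = F x' → F x ≠ p → F x ≠ q → x = x') {x₀ : X}
    (hp0 : p ≠ F x₀) (hq0 : q ≠ F x₀) (ι : ({x₀}ᶜ : Set X) ≃ₜ E) (τ : ({F x₀}ᶜ : Set Y) ≃ₜ E')
    {U : Set X} (hU : IsOpen U) (hpU : ∀ x, F x = p → x ∈ U) :
    ∃ e : E → X, IsOpenEmbedding e ∧ (∀ x, F x = p → x ∈ range e) ∧ range e ⊆ U := by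
  have hx0 : ∀ x, F x = F x₀ → x = x₀ := fun x hx =>
    hinj x x₀ hx (hx ▸ hp0.symm) (hx ▸ hq0.symm)
  let F' : ({x₀}ᶜ : Set X) → ({F x₀}ᶜ : Set Y) := fun x => ⟨F x, fun h => x.2 (hx0 _ h)⟩
  have hF' : Continuous F' := by fun_prop
  let f : ({x₀}ᶜ : Set X) → E' := fun x => τ (F' x)
  have hf : Continuous f := by fun_prop
  have hfs : Function.Surjective f := by
    intro y
    obtain ⟨x, hx⟩ := hs (τ.symm y)
    refine ⟨⟨x, fun h => (τ.symm y).2 ?_⟩, ?_⟩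
    · rw [mem_singleton_iff] at h ⊢
      rw [← hx, h]
    · have : F' ⟨x, fun h => (τ.symm y).2 (by
          rw [mem_singleton_iff] at h ⊢; rw [← hx, h])⟩ = τ.symm y := Subtype.ext hx
      simp only [f, this, Homeomorph.apply_symm_apply]
  set p' : E' := τ ⟨p, hp0⟩ with hp'
  set q' : E' := τ ⟨q, hq0⟩ with hq'
  have hfp : ∀ x, f x = p' ↔ F x = p := fun x => by
    simp only [f, hp', τ.injective.eq_iff, F', Subtype.ext_iff]
  have hfq : ∀ x, f x = q' ↔ F x = q := fun x => by
    simp only [f, hq', τ.injective.eq_iff, F', Subtype.ext_iff]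
  have hpq' : p' ≠ q' := fun h => hpq (Subtype.ext_iff.1 (τ.injective h))
  have hfi : ∀ x x', f x = f x' → f x ≠ p' → f x ≠ q' → x = x' := by
    intro x x' h h1 h2
    refine Subtype.ext (hinj x x' (Subtype.ext_iff.1 (τ.injective h)) ?_ ?_)
    · rwa [Ne, ← hfp]
    · rwa [Ne, ← hfq]
  have hfn : ∀ (y : E') (N : Set ({x₀}ᶜ : Set X)), IsOpen N → (∀ x, f x = y → x ∈ N) →
      f '' N ∈ 𝓝 y := by
    intro y N hN hyN
    obtain ⟨z, rfl⟩ := τ.surjective y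
    have h1 : IsOpen (Subtype.val '' N) :=
      isOpen_compl_singleton.isOpenEmbedding_subtypeVal.isOpenMap _ hN
    have h2 := image_mem_nhds_of_fiber hF hs (y := z) h1 (by
      intro x hx
      have hxx : x ≠ x₀ := fun h => z.2 (by rw [mem_singleton_iff, ← hx, h])
      exact ⟨⟨x, hxx⟩, hyN ⟨x, hxx⟩ (congrArg τ (Subtype.ext hx)), rfl⟩)
    have h3 : Subtype.val ⁻¹' (F '' (Subtype.val '' N)) ∈ 𝓝 z :=
      continuous_subtype_val.continuousAt.preimage_mem_nhds h2
    refine Filter.mem_of_superset (τ.isOpenMap.image_mem_nhds h3) ?_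
    rintro _ ⟨w, ⟨_, ⟨x, hx, rfl⟩, hxw⟩, rfl⟩
    exact ⟨x, hx, congrArg τ (Subtype.ext hxw)⟩
  have hfo : ∀ x, f x ≠ p' → f x ≠ q' → OpenAt f x := by
    intro x h1 h2 T hT
    obtain ⟨N, hNT, hN, hxN⟩ := mem_nhds_iff.1 (mem_map.1 hT)
    refine Filter.mem_of_superset (hfn (f x) N hN ?_) (image_subset_iff.2 hNT)
    intro x' hx'
    rw [← hfi x x' hx'.symm h1 h2]; exact hxN
  obtain ⟨h, g, hg, hfg, hhi, hhq, hho, hhp, hgq, hgo⟩ := exists_lift_shrink (V := {p'}ᶜ) hf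
    (isOpen_compl_singleton.mem_nhds (show q' ∈ ({p'}ᶜ : Set E') from hpq'.symm))
    (fun y _ => hfs y)
    (fun x x' h1 h2 h3 => hfi x x' h3 h1 h2) (fun x h1 h2 => hfo x h1 h2)
  have hhq' : ∀ y, y ≠ q' → h y ≠ q' := fun y hy h' => hy (hhi (h'.trans hhq.symm))
  have hgi : ∀ x x', g x = g x' → x = x' ∨ (f x = p' ∧ f x' = p') := by
    intro x x' hxx
    have h1 : f x = f x' := hhi (by rw [← hfg, ← hfg, hxx])
    by_cases h2 : f x = p'
    · exact Or.inr ⟨h2, h1 ▸ h2⟩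
    · by_cases h3 : f x = q'
      · left
        rw [← hgq x h3, ← hgq x' (h1 ▸ h3), hxx]
      · exact Or.inl (hfi x x' h1 h2 h3)
  obtain ⟨a, ha⟩ := hfs p'
  have hga : ∀ x, g x = g a ↔ f x = p' := by
    intro x
    constructor
    · intro hx
      rcases hgi x a hx with h1 | h1
      · rw [h1, ha]
      · exact h1.1
    · intro hx
      refine hfi _ _ (by rw [hfg, hfg, hx, ha]) ?_ ?_
      · rw [hfg]; exact hhp _
      · rw [hfg, hx]; exact hhq' _ hpq'
  -- `g` maps neighborhoods of the fibre of `p` to neighborhoods of the point `g a`.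
  have hgn : g '' (Subtype.val ⁻¹' U) ∈ 𝓝 (g a) := by
    have h1 : f '' (Subtype.val ⁻¹' U) ∈ 𝓝 p' := hfn p' _ (hU.preimage continuous_subtype_val)
      (fun x hx => hpU x ((hfp x).1 hx))
    have h2 : h '' (f '' (Subtype.val ⁻¹' U)) ∈ 𝓝 (f (g a)) := by
      rw [hfg, ha]
      exact hho p' (Filter.image_mem_map h1)
    have h3 : f (g a) ≠ q' := by rw [hfg, ha]; exact hhq' _ hpq'
    have h4 : f (g a) ≠ p' := by rw [hfg]; exact hhp _
    filter_upwards [hf.continuousAt.preimage_mem_nhds h2,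
      hf.continuousAt.preimage_mem_nhds (isOpen_ne.mem_nhds h3),
      hf.continuousAt.preimage_mem_nhds (isOpen_ne.mem_nhds h4)] with w h5 h6 h7
    obtain ⟨_, ⟨x, hx, rfl⟩, hxw⟩ := h5
    refine ⟨x, hx, ?_⟩
    rw [← hfg] at hxw
    exact (hfi w (g x) hxw.symm h7 h6).symm
  have hιo : ∀ x, OpenAt ι x := fun x => (ι.map_nhds_eq x).ge
  obtain ⟨h₂, e, he, hge, hh2i, hh2q, -, hh2V, heq, heo⟩ := exists_lift_shrink
    (f := fun x => ι (g x)) (q := ι (g a)) (V := ι '' (g '' (Subtype.val ⁻¹' U)))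
    (ι.continuous.comp hg) (ι.isOpenMap.image_mem_nhds hgn)
    (by rintro _ ⟨_, ⟨x, _, rfl⟩, rfl⟩; exact ⟨x, rfl⟩)
    (by
      intro x x' _ h1 h2
      rcases hgi x x' (ι.injective h2) with h3 | h3
      · exact h3
      · exact absurd (congrArg ι ((hga x).2 h3.1)) h1)
    (by
      intro x _ h1
      refine OpenAt.comp (hιo _) (hgo x ?_)
      by_cases h2 : f x = q'
      · exact Or.inr h2
      · exact Or.inl (hfo x (fun h3 => h1 (congrArg ι ((hga x).2 h3))) h2))
  have hei : Function.Injective e := by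
    intro x x' hxx
    have h1 : ι (g x) = ι (g x') := hh2i (by rw [← hge, ← hge, hxx])
    rcases hgi x x' (ι.injective h1) with h3 | h3
    · exact h3
    · rw [← heq x (congrArg ι ((hga x).2 h3.1)), ← heq x' (congrArg ι ((hga x').2 h3.2)), hxx]
  have heop : IsOpenMap e := by
    rw [isOpenMap_iff_nhds_le]
    intro x
    refine heo x ?_
    by_cases h1 : f x = p'
    · exact Or.inr (congrArg ι ((hga x).2 h1))
    · refine Or.inl (OpenAt.comp (hιo _) (hgo x ?_))
      by_cases h2 : f x = q'
      · exact Or.inr h2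
      · exact Or.inl (hfo x h1 h2)
  refine ⟨fun v => (e (ι.symm v) : X), ?_, ?_, ?_⟩
  · exact isOpen_compl_singleton.isOpenEmbedding_subtypeVal.comp
      ((IsOpenEmbedding.of_continuous_injective_isOpenMap he hei heop).comp
        ι.symm.isOpenEmbedding)
  · intro x hx
    have hxx : x ≠ x₀ := fun h => hp0 (by rw [← hx, h])
    refine ⟨ι ⟨x, hxx⟩, ?_⟩
    simp only [Homeomorph.symm_apply_apply]
    rw [heq _ (congrArg ι ((hga ⟨x, hxx⟩).2 ((hfp _).2 hx)))]
  · rintro _ ⟨v, rfl⟩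
    have h1 : ι (g (e (ι.symm v))) ∈ ι '' (g '' (Subtype.val ⁻¹' U)) := by
      rw [hge]; exact hh2V _
    obtain ⟨_, ⟨x, hx, rfl⟩, h2⟩ := h1
    rcases hgi _ _ (ι.injective h2) with h3 | h3
    · beta_reduce; rw [← h3]; exact hx
    · exact hpU _ ((hfp _).1 h3.2)

end Cellular

/-! ### Bing shrinking -/

section Squeeze

variable {E : Type*} [NormedAddCommGroup E] [NormedSpace ℝ E]

/-- Every ball can be squeezed into a concentric one by a homeomorphism with bounded support. -/
lemma exists_squeeze {R c : ℝ} (hR : 0 < R) (hc : 0 < c) (hc1 : c < 1) : ∃ s : E → E,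
    Continuous s ∧ Function.Bijective s ∧ (∀ v, 2 * R ≤ ‖v‖ → s v = v) ∧
      ∀ v, ‖v‖ ≤ R → ‖s v‖ = c * ‖v‖ := by
  let ρ : ℝ → ℝ := fun t => max c (min 1 (c + (1 - c) * (t - R) / R))
  have hρc : Continuous ρ := by
    have := hR.ne'
    fun_prop (disch := assumption)
  have hρ0 : ∀ t, 0 < ρ t := fun t => lt_max_of_lt_left hc
  have hρm : Monotone ρ := by
    intro a b hab
    refine max_le_max le_rfl (min_le_min le_rfl ?_)
    have : 0 < 1 - c := by linarith
    gcongr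
  have hρ1 : ∀ t, 2 * R ≤ t → ρ t = 1 := by
    intro t ht
    have : 1 ≤ c + (1 - c) * (t - R) / R := by
      have : 1 - c ≤ (1 - c) * (t - R) / R := by
        rw [le_div_iff₀ hR]; nlinarith
      linarith
    simp only [ρ, min_eq_left this, max_eq_right hc1.le]
  have hρ2 : ∀ t, t ≤ R → ρ t = c := by
    intro t ht
    have : (1 - c) * (t - R) / R ≤ 0 :=
      div_nonpos_of_nonpos_of_nonneg (by nlinarith) hR.le
    exact max_eq_left ((min_le_right _ _).trans (by linarith))
  have hn : ∀ v : E, ‖ρ ‖v‖ • v‖ = ρ ‖v‖ * ‖v‖ := fun v => by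
    rw [norm_smul, Real.norm_of_nonneg (hρ0 _).le]
  have hlt : ∀ a b : ℝ, 0 ≤ a → a < b → ρ a * a < ρ b * b := by
    intro a b ha hab
    have := hρm hab.le
    have := hρ0 b
    nlinarith
  refine ⟨fun v => ρ ‖v‖ • v, by fun_prop, ⟨?_, ?_⟩, ?_, ?_⟩
  · intro v w hvw
    beta_reduce at hvw
    have h1 : ρ ‖v‖ * ‖v‖ = ρ ‖w‖ * ‖w‖ := by rw [← hn, ← hn, hvw]
    have h2 : ‖v‖ = ‖w‖ := by
      rcases lt_trichotomy ‖v‖ ‖w‖ with h | h | h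
      · exact absurd h1 (hlt _ _ (norm_nonneg _) h).ne
      · exact h
      · exact absurd h1 (hlt _ _ (norm_nonneg _) h).ne'
    rw [h2] at hvw
    exact smul_right_injective E (hρ0 _).ne' hvw
  · intro w
    obtain ⟨t, ht, htw⟩ : ‖w‖ ∈ (fun t => ρ t * t) '' Icc 0 (max (2 * R) ‖w‖) := by
      refine intermediate_value_Icc (by positivity) (by fun_prop) ⟨by simp, ?_⟩
      rw [hρ1 _ (le_max_left _ _), one_mul]
      exact le_max_right _ _
    beta_reduce at htw
    have h1 : ‖(ρ t)⁻¹ • w‖ = t := by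
      rw [norm_smul, norm_inv, Real.norm_of_nonneg (hρ0 t).le, ← htw,
        inv_mul_cancel_left₀ (hρ0 t).ne']
    refine ⟨(ρ t)⁻¹ • w, ?_⟩
    beta_reduce
    rw [h1, smul_smul, mul_inv_cancel₀ (hρ0 t).ne', one_smul]
  · intro v hv
    simp only [hρ1 _ hv, one_smul]
  · intro v hv
    rw [hn, hρ2 _ hv]

end Squeeze

/-- A bijection of `E` with bounded support extends by the identity along an open embedding. -/
lemma exists_extend {E : Type*} [NormedAddCommGroup E] [ProperSpace E] {X : Type*}
    [TopologicalSpace X] [CompactSpace X] [T2Space X]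
    {e : E → X} (he : IsOpenEmbedding e) {s : E → E} (hs : Continuous s)
    (hsb : Function.Bijective s) {M : ℝ} (hM : ∀ v, M ≤ ‖v‖ → s v = v) :
    ∃ θ : X ≃ₜ X, (∀ v, θ (e v) = e (s v)) ∧ ∀ x, x ∉ range e → θ x = x := by
  classical
  let θ : X → X := fun x => if h : ∃ v, e v = x then e (s h.choose) else x
  have h1 : ∀ v, θ (e v) = e (s v) := by
    intro v
    have h : ∃ w, e w = e v := ⟨v, rfl⟩
    have h2 : h.choose = v := he.injective h.choose_spec
    simp only [θ, dif_pos h, h2]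
  have h2 : ∀ x, x ∉ range e → θ x = x := fun x hx => dif_neg hx
  have hθ : Continuous θ := by
    rw [continuous_iff_continuousAt]
    intro x
    by_cases hx : x ∈ range e
    · obtain ⟨v, rfl⟩ := hx
      rw [← he.continuousAt_iff]
      have : θ ∘ e = e ∘ s := funext h1
      rw [this]
      exact (he.continuous.comp hs).continuousAt
    · have hK : IsClosed (e '' Metric.closedBall 0 M) :=
        ((isCompact_closedBall 0 M).image he.continuous).isClosed
      refine continuousAt_id.congr ?_
      filter_upwards [hK.isOpen_compl.mem_nhds (fun h => hx (image_subset_range _ _ h))] with y hy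
      by_cases hye : y ∈ range e
      · obtain ⟨v, rfl⟩ := hye
        rw [h1, hM, id]
        by_contra hv
        exact hy ⟨v, by rw [mem_closedBall_zero_iff]; linarith, rfl⟩
      · exact (h2 y hye).symm
  have hb : Function.Bijective θ := by
    constructor
    · intro x y hxy
      by_cases hx : x ∈ range e <;> by_cases hy : y ∈ range e
      · obtain ⟨v, rfl⟩ := hx
        obtain ⟨w, rfl⟩ := hy
        rw [h1, h1] at hxy
        rw [hsb.1 (he.injective hxy)]
      · obtain ⟨v, rfl⟩ := hx
        rw [h1, h2 y hy] at hxy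
        exact absurd ⟨_, hxy⟩ hy
      · obtain ⟨w, rfl⟩ := hy
        rw [h1, h2 x hx] at hxy
        exact absurd ⟨_, hxy.symm⟩ hx
      · rwa [h2 x hx, h2 y hy] at hxy
    · intro x
      by_cases hx : x ∈ range e
      · obtain ⟨v, rfl⟩ := hx
        obtain ⟨w, rfl⟩ := hsb.2 v
        exact ⟨e w, h1 w⟩
      · exact ⟨x, h2 x hx⟩
  exact ⟨Continuous.homeoOfEquivCompactToT2 (f := Equiv.ofBijective θ hb) hθ, h1, h2⟩

/-- Bing's shrinking criterion for a map `f` with a single nondegenerate fibre, that of `o`,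
relative to a set `T`. Among the limits of maps `f ∘ θ`, with `θ` a homeomorphism fixing `T`,
those whose fibres have diameter less than a given number form a dense open set, so one of them is
injective by the Baire category theorem. -/
lemma exists_injective_of_shrinkable {K E : Type*} [MetricSpace K] [CompactSpace K] [MetricSpace E]
    [CompleteSpace E] (f : C(K, E)) (o : E) (T : Set K)
    (hinj : ∀ x x', f x = f x' → f x ≠ o → x = x')
    (hsh : ∀ ε > 0, ∀ δ > 0, ∃ ψ : K ≃ₜ K, (∀ x ∈ T, ψ x = x) ∧ (∀ x, dist (f (ψ x)) (f x) ≤ ε) ∧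
      ∀ a b, f (ψ a) = o → f (ψ b) = o → dist a b < δ) :
    ∃ g : C(K, E), Function.Injective g ∧ (∀ x ∈ T, g x = f x) ∧ range g = range f := by
  let A : Set C(K, E) := {g | ∃ θ : K ≃ₜ K, (∀ x ∈ T, θ x = x) ∧ ∀ x, g x = f (θ x)}
  have hfA : f ∈ A := ⟨Homeomorph.refl K, fun _ _ => rfl, fun _ => rfl⟩
  let H := closure A
  have : CompleteSpace H := isClosed_closure.completeSpace_coe
  have : Nonempty H := ⟨⟨f, subset_closure hfA⟩⟩
  let O : ℕ → Set H := fun m => {g | ∀ a b, g.1 a = g.1 b → dist a b < 1 / ((m : ℝ) + 1)}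
  have hO : ∀ m, IsOpen (O m) := by
    intro m
    let Z : Set ((K × K) × H) :=
      {z | z.2.1 z.1.1 = z.2.1 z.1.2} ∩ {z | 1 / ((m : ℝ) + 1) ≤ dist z.1.1 z.1.2}
    have hZ : IsClosed Z := by
      refine IsClosed.inter (isClosed_eq ?_ ?_) (isClosed_le ?_ ?_) <;> fun_prop
    have : (O m)ᶜ = Prod.snd '' Z := by
      ext g
      simp only [O, Z, mem_compl_iff, mem_inter_iff, mem_ofPred_eq, not_forall, not_lt, mem_image, Prod.exists,
        exists_eq_right]
      exact ⟨fun ⟨a, b, h, h'⟩ => ⟨a, b, h, h'⟩, fun ⟨a, b, h, h'⟩ => ⟨a, b, h, h'⟩⟩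
    rw [← isClosed_compl_iff, this]
    exact isClosedMap_snd_of_compactSpace _ hZ
  have hd : ∀ m, Dense (O m) := by
    intro m
    rw [Metric.dense_iff]
    rintro ⟨g, hg⟩ ε hε
    obtain ⟨g₁, ⟨θ, hθT, hθ⟩, hg₁⟩ := Metric.mem_closure_iff.1 hg (ε / 2) (half_pos hε)
    have hm : 0 < 1 / ((m : ℝ) + 1) := by positivity
    obtain ⟨δ, hδ, hδθ⟩ := Metric.uniformContinuous_iff.1
      (CompactSpace.uniformContinuous_of_continuous θ.symm.continuous) _ hm
    obtain ⟨ψ, hψT, hψ, hψd⟩ := hsh (ε / 4) (by positivity) δ hδ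
    let g₂ : C(K, E) := ⟨fun x => f (ψ (θ x)), by fun_prop⟩
    have hg₂A : g₂ ∈ A := ⟨θ.trans ψ, fun x hx => by
      rw [Homeomorph.trans_apply, hθT x hx, hψT x hx], fun x => rfl⟩
    refine ⟨⟨g₂, subset_closure hg₂A⟩, ?_, ?_⟩
    · rw [Metric.mem_ball, Subtype.dist_eq]
      have h1 : dist g₂ g₁ ≤ ε / 4 := by
        rw [ContinuousMap.dist_le (by positivity)]
        intro x
        rw [hθ]
        exact hψ (θ x)
      have := dist_triangle g₂ g₁ g
      rw [dist_comm g₁ g] at this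
      change dist g₂ g < ε
      linarith
    · intro a b hab
      change f (ψ (θ a)) = f (ψ (θ b)) at hab
      by_cases h0 : f (ψ (θ a)) = o
      · have := hδθ (hψd _ _ h0 (hab ▸ h0))
        simpa using this
      · have := θ.injective (ψ.injective (hinj _ _ hab h0))
        rw [this, dist_self]
        exact hm
  obtain ⟨⟨g, hg⟩, hgO⟩ := (dense_iInter_of_isOpen_nat hO hd).nonempty
  rw [mem_iInter] at hgO
  refine ⟨g, ?_, ?_, ?_⟩
  · intro a b hab
    by_contra hne
    obtain ⟨m, hm⟩ := exists_nat_one_div_lt (dist_pos.2 hne)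
    exact lt_asymm hm (hgO m a b hab)
  · intro x hx
    have hcl : IsClosed {g : C(K, E) | g x = f x} := isClosed_eq (by fun_prop) (by fun_prop)
    refine closure_minimal ?_ hcl hg
    rintro g₁ ⟨θ, hθT, hθ⟩
    rw [mem_ofPred_eq, hθ, hθT x hx]
  · apply Subset.antisymm
    · rintro _ ⟨x, rfl⟩
      have hr : IsClosed (range f) := (isCompact_range f.continuous).isClosed
      have hcl : IsClosed {g : C(K, E) | g x ∈ range f} := hr.preimage (by fun_prop)
      refine closure_minimal ?_ hcl hg
      rintro g₁ ⟨θ, hθT, hθ⟩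
      exact ⟨θ x, (hθ x).symm⟩
    · rintro _ ⟨x, rfl⟩
      have hr : IsClosed (range g) := (isCompact_range g.continuous).isClosed
      rw [← hr.closure_eq, Metric.mem_closure_iff]
      intro ε hε
      obtain ⟨g₁, ⟨θ, hθT, hθ⟩, hg₁⟩ := Metric.mem_closure_iff.1 hg ε hε
      refine ⟨g (θ.symm x), mem_range_self _, ?_⟩
      have h1 := ContinuousMap.dist_apply_le_dist (f := g) (g := g₁) (θ.symm x)
      rw [hθ, Homeomorph.apply_symm_apply, dist_comm] at h1
      exact h1.trans_lt hg₁

/-! ### From collapses to disks -/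

/-- The map `f` sends the side `P` of `S` together with `S` onto the closed unit ball, with `S`
going to the unit sphere and `P` to the open ball, and its only nondegenerate fibre in `P ∪ S` is
that of the centre. -/
structure Collapse {X E : Type*} [TopologicalSpace X] [NormedAddCommGroup E] (P S : Set X)
    (f : X → E) : Prop where
  continuousOn : ContinuousOn f (P ∪ S)
  norm_lt : ∀ x ∈ P, ‖f x‖ < 1
  norm_eq : ∀ x ∈ S, ‖f x‖ = 1
  inj : ∀ x ∈ P ∪ S, ∀ x' ∈ P ∪ S, f x = f x' → f x ≠ 0 → x = x'
  surjOn : SurjOn f (P ∪ S) (Metric.closedBall 0 1)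

namespace Collapse

variable {X E : Type*} [TopologicalSpace X] [NormedAddCommGroup E] {P S : Set X} {f : X → E}

lemma norm_le (hf : Collapse P S f) {x : X} (hx : x ∈ P ∪ S) : ‖f x‖ ≤ 1 :=
  hx.elim (fun h => (hf.norm_lt x h).le) (fun h => (hf.norm_eq x h).le)

end Collapse

/-- If the central fibre of a collapse has arbitrarily small neighborhoods that are open cells,
the collapse can be replaced by a homeomorphism onto the closed ball with the same values on `S`:
squeezing a cell towards its centre verifies Bing's criterion. -/
lemma exists_injective_of_cells {X E E' : Type*} [MetricSpace X] [CompactSpace X]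
    [NormedAddCommGroup E] [CompleteSpace E] [NormedAddCommGroup E'] [NormedSpace ℝ E']
    [ProperSpace E'] {P S : Set X} (hP : IsOpen P) (hPS : IsClosed (P ∪ S)) (hd : Disjoint P S)
    {f : X → E} (hf : Collapse P S f)
    (hcell : ∀ U, IsOpen U → (∀ x ∈ P, f x = 0 → x ∈ U) →
      ∃ e : E' → X, IsOpenEmbedding e ∧ (∀ x ∈ P, f x = 0 → x ∈ range e) ∧ range e ⊆ U) :
    ∃ g : C(↥(P ∪ S), E), Function.Injective g ∧ (∀ x : ↥(P ∪ S), (x : X) ∈ S → g x = f x) ∧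
      range g = Metric.closedBall 0 1 := by
  let K := ↥(P ∪ S)
  have : CompactSpace K := isCompact_iff_compactSpace.1 hPS.isCompact
  let fK : C(K, E) := ⟨fun x => f x, hf.continuousOn.domRestrict⟩
  obtain ⟨g, hgi, hgS, hgr⟩ := exists_injective_of_shrinkable fK 0 {x : K | (x : X) ∈ S}
    (fun x x' h1 h2 => Subtype.ext (hf.inj x x.2 x' x'.2 h1 h2)) (by
      intro ε hε δ hδ
      let U : Set X := P ∩ f ⁻¹' Metric.ball 0 (ε / 2)
      have hU : IsOpen U :=
        (hf.continuousOn.mono subset_union_left).isOpen_inter_preimage hP Metric.isOpen_ball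
      obtain ⟨e, he, hAe, heU⟩ := hcell U hU (fun x hx h0 => ⟨hx, by
        rw [mem_preimage, h0]; exact Metric.mem_ball_self (half_pos hε)⟩)
      let A : Set X := (P ∪ S) ∩ f ⁻¹' {0}
      have hAP : ∀ x ∈ A, x ∈ P := by
        rintro x ⟨hx, hx0⟩
        rcases hx with h | h
        · exact h
        · have := hf.norm_eq x h
          rw [mem_preimage, mem_singleton_iff] at hx0
          rw [hx0, norm_zero] at this
          exact absurd this zero_ne_one
      have hA : IsCompact A :=
        (hf.continuousOn.preimage_isClosed_of_isClosed hPS isClosed_singleton).isCompact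
      have heA : IsCompact (e ⁻¹' A) :=
        (he.isInducing.isCompact_preimage_iff (fun x hx => hAe x (hAP x hx) hx.2)).2 hA
      obtain ⟨R, hR, hAR⟩ := heA.isBounded.subset_closedBall_lt 0 0
      obtain ⟨r, hr, hre⟩ := Metric.continuousAt_iff.1 (he.continuous.continuousAt (x := 0))
        (δ / 2) (half_pos hδ)
      obtain ⟨c, hc, hc1, hcR⟩ : ∃ c : ℝ, 0 < c ∧ c < 1 ∧ c * R < r := by
        refine ⟨min (1 / 2) (r / (2 * R)), lt_min (by norm_num) (by positivity),
          (min_le_left _ _).trans_lt (by norm_num), ?_⟩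
        calc min (1 / 2) (r / (2 * R)) * R ≤ r / (2 * R) * R := by
              gcongr; exact min_le_right _ _
          _ = r / 2 := by field_simp
          _ < r := half_lt_self hr
      obtain ⟨s, hs, hsb, hs1, hs2⟩ := exists_squeeze (E := E') hR hc hc1
      obtain ⟨θ, hθ1, hθ2⟩ := exists_extend he hs hsb hs1
      have hePS : ∀ v, e v ∈ P ∪ S := fun v => Or.inl (heU ⟨v, rfl⟩).1
      let ψ : K ≃ₜ K := θ.subtype (fun x => by
        by_cases hx : x ∈ range e
        · obtain ⟨v, rfl⟩ := hx
          rw [hθ1]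
          exact iff_of_true (hePS _) (hePS _)
        · rw [hθ2 x hx])
      have hψ : ∀ x : K, (ψ x : X) = θ x := fun x => rfl
      have hsmall : ∀ y : K, (y : X) ∈ A → dist (ψ y : X) (e 0) < δ / 2 := by
        intro y hy
        obtain ⟨v, hv⟩ := hAe y (hAP y hy) hy.2
        have hvR : ‖v‖ ≤ R := by
          have := hAR (show v ∈ e ⁻¹' A by rw [mem_preimage, hv]; exact hy)
          rwa [mem_closedBall_zero_iff] at this
        rw [hψ, ← hv, hθ1]
        apply hre
        rw [dist_zero_right, hs2 v hvR]
        exact (mul_le_mul_of_nonneg_left hvR hc.le).trans_lt hcR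
      refine ⟨ψ.symm, ?_, ?_, ?_⟩
      · intro x hx
        rw [mem_ofPred_eq] at hx
        rw [Homeomorph.symm_apply_eq]
        refine Subtype.ext ?_
        rw [hψ, hθ2]
        exact fun h => hd.le_bot ⟨(heU h).1, hx⟩
      · intro x
        obtain ⟨y, rfl⟩ := ψ.surjective x
        rw [Homeomorph.symm_apply_apply]
        change dist (f y) (f (θ y)) ≤ ε
        by_cases hy : (y : X) ∈ range e
        · obtain ⟨v, hv⟩ := hy
          rw [← hv, hθ1]
          have h1 := (heU ⟨v, rfl⟩).2
          have h2 := (heU ⟨s v, rfl⟩).2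
          rw [mem_preimage, Metric.mem_ball] at h1 h2
          have := dist_triangle_right (f (e v)) (f (e (s v))) 0
          linarith
        · rw [hθ2 _ hy, dist_self]
          exact hε.le
      · intro a b ha hb
        obtain ⟨y, rfl⟩ := ψ.surjective a
        obtain ⟨z, rfl⟩ := ψ.surjective b
        rw [Homeomorph.symm_apply_apply] at ha hb
        have h1 := hsmall y ⟨y.2, ha⟩
        have h2 := hsmall z ⟨z.2, hb⟩
        rw [Subtype.dist_eq]
        have := dist_triangle_right (ψ y : X) (ψ z : X) (e 0)
        linarith)
  refine ⟨g, hgi, fun x hx => hgS x hx, hgr.trans (Subset.antisymm ?_ ?_)⟩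
  · rintro _ ⟨x, rfl⟩
    rw [mem_closedBall_zero_iff]
    exact hf.norm_le x.2
  · intro y hy
    obtain ⟨x, hx, rfl⟩ := hf.surjOn hy
    exact ⟨⟨x, hx⟩, rfl⟩

/-- A side of `S` whose union with `S` maps homeomorphically onto the closed ball, `S` going to the
sphere, is connected: it corresponds to the open ball. -/
lemma disk_of_injective {X E : Type*} [TopologicalSpace X] [CompactSpace X]
    [NormedAddCommGroup E] [NormedSpace ℝ E] {P S : Set X} (hPS : IsClosed (P ∪ S))
    (hd : Disjoint P S) {f : X → E} (hf : Collapse P S f) {g : C(↥(P ∪ S), E)}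
    (hgi : Function.Injective g) (hgS : ∀ x : ↥(P ∪ S), (x : X) ∈ S → g x = f x)
    (hgr : range g = Metric.closedBall 0 1) :
    Nonempty (↥(P ∪ S) ≃ₜ Metric.closedBall (0 : E) 1) ∧ IsPreconnected P := by
  have : CompactSpace ↥(P ∪ S) := isCompact_iff_compactSpace.1 hPS.isCompact
  let G : ↥(P ∪ S) ≃ₜ Metric.closedBall (0 : E) 1 :=
    ((g.continuous.isClosedEmbedding hgi).isEmbedding.toHomeomorph).trans (Homeomorph.setCongr hgr)
  have hG : ∀ x, (G x : E) = g x := fun x => rfl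
  refine ⟨⟨G⟩, ?_⟩
  have hSn : ∀ y : E, ‖y‖ = 1 → ∃ x : ↥(P ∪ S), (x : X) ∈ S ∧ g x = y := by
    intro y hy
    obtain ⟨x, hx, rfl⟩ := hf.surjOn (show y ∈ Metric.closedBall 0 1 by simp [hy])
    have hxS : x ∈ S := hx.resolve_left fun h => (hf.norm_lt x h).ne hy
    exact ⟨⟨x, hx⟩, hxS, hgS _ hxS⟩
  let B : Set (Metric.closedBall (0 : E) 1) := {y | (y : E) ∈ Metric.ball 0 1}
  have hB : IsPreconnected B := by
    rw [← IsInducing.subtypeVal.isPreconnected_image]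
    have : Subtype.val '' B = Metric.ball (0 : E) 1 := by
      ext y
      constructor
      · rintro ⟨y, hy, rfl⟩
        exact hy
      · intro hy
        exact ⟨⟨y, Metric.ball_subset_closedBall hy⟩, hy, rfl⟩
    rw [this]
    exact (convex_ball _ _).isPreconnected
  have hP : P = (fun y => (G.symm y : X)) '' B := by
    ext x
    constructor
    · intro hx
      refine ⟨G ⟨x, Or.inl hx⟩, ?_, by simp⟩
      have h1 : ‖g ⟨x, Or.inl hx⟩‖ ≤ 1 := by
        rw [← mem_closedBall_zero_iff, ← hgr]; exact mem_range_self _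
      have h2 : ‖g ⟨x, Or.inl hx⟩‖ ≠ 1 := by
        intro h
        obtain ⟨x', hx', h3⟩ := hSn _ h
        rw [hgi h3] at hx'
        exact hd.le_bot ⟨hx, hx'⟩
      change _ ∈ Metric.ball _ _
      rw [hG, mem_ball_zero_iff]
      exact lt_of_le_of_ne h1 h2
    · rintro ⟨y, hy, rfl⟩
      obtain ⟨x, rfl⟩ := G.surjective y
      change (G x : E) ∈ Metric.ball _ _ at hy
      rw [hG, mem_ball_zero_iff] at hy
      simp only [Homeomorph.symm_apply_apply]
      refine x.2.resolve_right fun h => ?_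
      rw [hgS x h, hf.norm_eq x h] at hy
      exact lt_irrefl _ hy
  rw [hP]
  exact hB.image _ (by fun_prop)

/-- The complement of a point of a unit sphere is homeomorphic to a Euclidean space. -/
noncomputable def sphereComplHomeo {E : Type*} [NormedAddCommGroup E] [InnerProductSpace ℝ E]
    (v : Metric.sphere (0 : E) 1) : ({v}ᶜ : Set (Metric.sphere (0 : E) 1)) ≃ₜ (ℝ ∙ (v : E))ᗮ :=
  let S := stereographic (norm_eq_of_mem_sphere v)
  ((Homeomorph.setCongr (show ({v}ᶜ : Set (Metric.sphere (0 : E) 1)) = S.source from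
    (stereographic_source (norm_eq_of_mem_sphere v)).symm)).trans S.toHomeomorphSourceTarget).trans
    ((Homeomorph.setCongr (stereographic_target (norm_eq_of_mem_sphere v))).trans
      (Homeomorph.Set.univ _))

/-- Collapses of the two sides which agree on `S` fit together to a map from `X` onto a sphere, the
two closed balls becoming hemispheres. Its only nondegenerate fibres are those of the poles, so the
central fibre of each collapse is cellular. -/
lemma Collapse.exists_cell {X E E' : Type*} [TopologicalSpace X] [CompactSpace X] [T2Space X]
    [NormedAddCommGroup E] [InnerProductSpace ℝ E] [NormedAddCommGroup E'] [NormedSpace ℝ E']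
    {P N S : Set X} (hPS : IsClosed (P ∪ S)) (hNS : IsClosed (N ∪ S)) (hPN : Disjoint P N)
    (hcov : P ∪ N = Sᶜ) {f f' : X → E} (hf : Collapse P S f) (hf' : Collapse N S f')
    (hff : ∀ x ∈ S, f x = f' x) {x₀ : X} (hx₀ : x₀ ∈ S) (ι : ({x₀}ᶜ : Set X) ≃ₜ E')
    {U : Set X} (hU : IsOpen U) (hpU : ∀ x ∈ P, f x = 0 → x ∈ U) :
    ∃ e : E' → X, IsOpenEmbedding e ∧ (∀ x ∈ P, f x = 0 → x ∈ range e) ∧ range e ⊆ U := by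
  classical
  have hcase : ∀ x, x ∈ P ∨ x ∈ N ∪ S := by
    intro x
    by_cases hx : x ∈ S
    · exact Or.inr (Or.inr hx)
    · rw [← mem_compl_iff, ← hcov] at hx
      exact hx.imp id Or.inl
  have hPd : ∀ x ∈ N ∪ S, x ∉ P := by
    rintro x (hx | hx) hxP
    · exact hPN.le_bot ⟨hxP, hx⟩
    · have : x ∈ Sᶜ := hcov ▸ Or.inl hxP
      exact this hx
  let W := WithLp 2 (E × ℝ)
  let u : X → W := fun x => WithLp.toLp 2 (f x, √(1 - ‖f x‖ ^ 2))
  let u' : X → W := fun x => WithLp.toLp 2 (f' x, -√(1 - ‖f' x‖ ^ 2))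
  let F₀ : X → W := fun x => if x ∈ P then u x else u' x
  have hFP : ∀ x ∈ P ∪ S, F₀ x = u x := by
    rintro x (hx | hx)
    · exact if_pos hx
    · have : F₀ x = u' x := if_neg (hPd x (Or.inr hx))
      rw [this]
      simp only [u, u', ← hff x hx, hf.norm_eq x hx]
      norm_num
  have hFN : ∀ x ∈ N ∪ S, F₀ x = u' x := fun x hx => if_neg (hPd x hx)
  have hnorm : ∀ w : W, ‖w‖ = 1 ↔ ‖w.fst‖ ^ 2 + w.snd ^ 2 = 1 := by
    intro w
    have := WithLp.prod_norm_sq_eq_of_L2 w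
    rw [Real.norm_eq_abs, sq_abs] at this
    rw [← this]
    constructor
    · intro h; rw [h]; norm_num
    · intro h
      exact (pow_eq_one_iff_of_nonneg (norm_nonneg w) two_ne_zero).1 h
  have hsq : ∀ a : E, ‖a‖ ≤ 1 → √(1 - ‖a‖ ^ 2) ^ 2 = 1 - ‖a‖ ^ 2 := fun a ha =>
    Real.sq_sqrt (by nlinarith [norm_nonneg a])
  have hF1 : ∀ x, F₀ x ∈ Metric.sphere (0 : W) 1 := by
    intro x
    rw [mem_sphere_zero_iff_norm, hnorm]
    rcases hcase x with hx | hx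
    · rw [hFP x (Or.inl hx)]
      change ‖f x‖ ^ 2 + √(1 - ‖f x‖ ^ 2) ^ 2 = 1
      rw [hsq _ (hf.norm_le (Or.inl hx))]
      ring
    · rw [hFN x hx]
      change ‖f' x‖ ^ 2 + (-√(1 - ‖f' x‖ ^ 2)) ^ 2 = 1
      rw [neg_sq, hsq _ (hf'.norm_le hx)]
      ring
  have hFc : Continuous F₀ := by
    rw [← continuousOn_univ]
    have h1 : ContinuousOn F₀ (P ∪ S) := by
      refine ContinuousOn.congr ?_ hFP
      have := hf.continuousOn
      exact (WithLp.prod_continuous_toLp 2 E ℝ).comp_continuousOn (by fun_prop)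
    have h2 : ContinuousOn F₀ (N ∪ S) := by
      refine ContinuousOn.congr ?_ hFN
      have := hf'.continuousOn
      exact (WithLp.prod_continuous_toLp 2 E ℝ).comp_continuousOn (by fun_prop)
    have h3 : (univ : Set X) = (P ∪ S) ∪ (N ∪ S) :=
      (eq_univ_of_forall fun x => (hcase x).imp Or.inl id).symm
    rw [h3]
    exact h1.union_of_isClosed h2 hPS hNS
  have hpos : ∀ x ∈ P, 0 < (F₀ x).snd := by
    intro x hx
    rw [hFP x (Or.inl hx)]
    refine Real.sqrt_pos.2 ?_
    nlinarith [norm_nonneg (f x), hf.norm_lt x hx]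
  have hneg : ∀ x ∈ N ∪ S, (F₀ x).snd ≤ 0 := by
    intro x hx
    rw [hFN x hx]
    exact neg_nonpos.2 (Real.sqrt_nonneg _)
  have hext : ∀ w w' : W, w.fst = w'.fst → w.snd = w'.snd → w = w' := fun w w' h1 h2 =>
    (WithLp.ofLp_injective 2) (Prod.ext h1 h2)
  let F : X → Metric.sphere (0 : W) 1 := fun x => ⟨F₀ x, hF1 x⟩
  let p : Metric.sphere (0 : W) 1 :=
    ⟨WithLp.toLp 2 (0, 1), by rw [mem_sphere_zero_iff_norm, hnorm]; simp⟩
  let q : Metric.sphere (0 : W) 1 :=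
    ⟨WithLp.toLp 2 (0, -1), by rw [mem_sphere_zero_iff_norm, hnorm]; simp⟩
  have hs2 : ∀ y : Metric.sphere (0 : W) 1, (y : W).snd ^ 2 = 1 - ‖(y : W).fst‖ ^ 2 := by
    intro y
    have := (hnorm y).1 (norm_eq_of_mem_sphere y)
    linarith
  have hFs : Function.Surjective F := by
    intro y
    have h1 := hs2 y
    have h2 : (y : W).fst ∈ Metric.closedBall (0 : E) 1 := by
      rw [mem_closedBall_zero_iff]
      nlinarith [sq_nonneg (y : W).snd, norm_nonneg (y : W).fst]
    rcases le_total 0 (y : W).snd with h | h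
    · obtain ⟨x, hx, hxy⟩ := hf.surjOn h2
      refine ⟨x, Subtype.ext ?_⟩
      change F₀ x = y
      rw [hFP x hx]
      refine hext _ _ hxy ?_
      change √(1 - ‖f x‖ ^ 2) = _
      rw [hxy, ← h1, Real.sqrt_sq h]
    · obtain ⟨x, hx, hxy⟩ := hf'.surjOn h2
      refine ⟨x, Subtype.ext ?_⟩
      change F₀ x = y
      rw [hFN x hx]
      refine hext _ _ hxy ?_
      change -√(1 - ‖f' x‖ ^ 2) = _
      rw [hxy, ← h1, Real.sqrt_sq_eq_abs, abs_of_nonpos h, neg_neg]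
  have hFp : ∀ x ∈ P, f x = 0 → F x = p := by
    intro x hx h0
    refine Subtype.ext ?_
    change F₀ x = _
    rw [hFP x (Or.inl hx)]
    simp [u, p, h0]
  have hFp' : ∀ x, F x = p → x ∈ P ∧ f x = 0 := by
    intro x hx
    have h1 : F₀ x = WithLp.toLp 2 (0, 1) := congrArg Subtype.val hx
    have hxP : x ∈ P := by
      refine (hcase x).resolve_right fun h => ?_
      have := hneg x h
      rw [h1] at this
      exact absurd this (by simp)
    rw [hFP x (Or.inl hxP)] at h1
    exact ⟨hxP, congrArg WithLp.fst h1⟩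
  have hFq : ∀ x ∈ N ∪ S, f' x = 0 → F x = q := by
    intro x hx h0
    refine Subtype.ext ?_
    change F₀ x = _
    rw [hFN x hx]
    simp [u', q, h0]
  have hinj : ∀ x x', F x = F x' → F x ≠ p → F x ≠ q → x = x' := by
    intro x x' h hp hq
    have h0 : F₀ x = F₀ x' := congrArg Subtype.val h
    rcases hcase x with hx | hx <;> rcases hcase x' with hx' | hx'
    · refine hf.inj x (Or.inl hx) x' (Or.inl hx') ?_ fun h1 => hp (hFp x hx h1)
      rw [hFP x (Or.inl hx), hFP x' (Or.inl hx')] at h0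
      exact congrArg WithLp.fst h0
    · have := hpos x hx
      rw [h0] at this
      exact absurd (hneg x' hx') this.not_ge
    · have := hpos x' hx'
      rw [← h0] at this
      exact absurd (hneg x hx) this.not_ge
    · refine hf'.inj x hx x' hx' ?_ fun h1 => hq (hFq x hx h1)
      rw [hFN x hx, hFN x' hx'] at h0
      exact congrArg WithLp.fst h0
  have hx₀1 : ∀ t : ℝ, F₀ x₀ ≠ WithLp.toLp 2 (0, t) := by
    intro t h
    rw [hFP x₀ (Or.inr hx₀)] at h
    have h1 : f x₀ = 0 := congrArg WithLp.fst h
    have h2 := hf.norm_eq x₀ hx₀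
    rw [h1, norm_zero] at h2
    exact zero_ne_one h2
  have hpq : p ≠ q := by
    intro h
    have h1 : (1 : ℝ) = -1 := congrArg (fun w : Metric.sphere (0 : W) 1 => (w : W).snd) h
    norm_num at h1
  obtain ⟨e, he, hpe, heU⟩ := Schoenflies.exists_cell (F := F) (by fun_prop) hFs hpq hinj
    (fun h => hx₀1 1 (congrArg Subtype.val h.symm))
    (fun h => hx₀1 (-1) (congrArg Subtype.val h.symm)) ι (sphereComplHomeo (F x₀)) hU
    (fun x hx => hpU x (hFp' x hx).1 (hFp' x hx).2)
  exact ⟨e, he, fun x hx h0 => hpe x (hFp x hx h0), heU⟩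

/-! ### The two sides of a locally flat sphere -/

/-- Stereographic projection, with values in `ℝⁿ`. -/
noncomputable def puncturedSphereHomeo {n : ℕ}
    (v : Metric.sphere (0 : EuclideanSpace ℝ (Fin (n + 1))) 1) :
    ({v}ᶜ : Set (Metric.sphere (0 : EuclideanSpace ℝ (Fin (n + 1))) 1)) ≃ₜ
      EuclideanSpace ℝ (Fin n) :=
  have : Fact (Module.finrank ℝ (EuclideanSpace ℝ (Fin (n + 1))) = n + 1) := ⟨by simp⟩
  (sphereComplHomeo v).trans (OrthonormalBasis.fromOrthogonalSpanSingleton n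
    (ne_zero_of_mem_unit_sphere v)).repr.toHomeomorph

lemma connectedComponentIn_compl_eq {X : Type*} [TopologicalSpace X] {S P N : Set X} (hP : IsOpen P)
    (hN : IsOpen N) (hPN : Disjoint P N) (hcov : P ∪ N = Sᶜ) (hPc : IsPreconnected P) {x : X}
    (hx : x ∈ P) : connectedComponentIn Sᶜ x = P := by
  have hxS : x ∈ Sᶜ := hcov ▸ Or.inl hx
  refine Subset.antisymm ?_ (hPc.subset_connectedComponentIn hx (hcov ▸ subset_union_left))
  refine isPreconnected_connectedComponentIn.subset_left_of_subset_union hP hN hPN ?_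
    ⟨x, mem_connectedComponentIn hxS, hx⟩
  rw [hcov]
  exact connectedComponentIn_subset _ _

lemma card_connectedComponents_compl {X : Type*} [TopologicalSpace X] {S P N : Set X}
    (hP : IsOpen P) (hN : IsOpen N) (hPN : Disjoint P N) (hcov : P ∪ N = Sᶜ)
    (hPc : IsPreconnected P) (hNc : IsPreconnected N) (hPne : P.Nonempty) (hNne : N.Nonempty) :
    Nat.card (ConnectedComponents ↥(Sᶜ)) = 2 := by
  obtain ⟨a, ha⟩ := hPne
  obtain ⟨b, hb⟩ := hNne
  have haS : a ∈ Sᶜ := hcov ▸ Or.inl ha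
  have hbS : b ∈ Sᶜ := hcov ▸ Or.inr hb
  have hmk : ∀ (x : X) (hx : x ∈ Sᶜ) (y : X) (hy : y ∈ Sᶜ),
      (ConnectedComponents.mk (⟨y, hy⟩ : ↥(Sᶜ)) = ConnectedComponents.mk ⟨x, hx⟩) ↔
        y ∈ connectedComponentIn Sᶜ x := by
    intro x hx y hy
    rw [ConnectedComponents.coe_eq_coe', connectedComponentIn_eq_image hx]
    exact ⟨fun h => ⟨_, h, rfl⟩, fun ⟨z, hz, hzy⟩ => by
      have : z = ⟨y, hy⟩ := Subtype.ext hzy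
      exact this ▸ hz⟩
  have hPa := connectedComponentIn_compl_eq hP hN hPN hcov hPc ha
  have hNb := connectedComponentIn_compl_eq hN hP hPN.symm (union_comm N P ▸ hcov) hNc hb
  rw [Nat.card_eq_two_iff]
  refine ⟨ConnectedComponents.mk ⟨a, haS⟩, ConnectedComponents.mk ⟨b, hbS⟩, ?_, ?_⟩
  · intro h
    rw [hmk, hNb] at h
    exact hPN.le_bot ⟨ha, h⟩
  · refine eq_univ_of_forall fun c => ?_
    obtain ⟨⟨y, hy⟩, rfl⟩ := ConnectedComponents.surjective_coe c
    have hy' := hy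
    rw [← hcov] at hy'
    rcases hy' with h | h
    · left
      rw [hmk, hPa]; exact h
    · right
      rw [mem_singleton_iff, hmk, hNb]; exact h

lemma exists_flatChart {X : Type*} [TopologicalSpace X] {n : ℕ} {S : Set X} {i₀ : Fin n}
    (hi₀ : (i₀ : ℕ) = n - 1) (hS : IsLocallyFlat n S) :
    ∀ x ∈ S, ∃ φ : EuclideanSpace ℝ (Fin n) → X,
      FlatChart S (EuclideanSpace.proj i₀ : EuclideanSpace ℝ (Fin n) →L[ℝ] ℝ) φ ∧ x ∈ range φ := by
  intro x hx
  obtain ⟨U, hU, hxU, h, hh⟩ := hS x hx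
  refine ⟨fun z => h.symm z, ⟨hU.isOpenEmbedding_subtypeVal.comp h.symm.isOpenEmbedding, ?_⟩,
    h ⟨x, hxU⟩, by simp⟩
  intro z
  have h1 : z ∈ h '' ((↑) ⁻¹' S) ↔ (h.symm z : X) ∈ S := by
    constructor
    · rintro ⟨y, hy, rfl⟩
      rw [Homeomorph.symm_apply_apply]; exact hy
    · intro hz
      exact ⟨h.symm z, hz, by simp⟩
  rw [← h1, hh, mem_ofPred_eq]
  change _ ↔ z i₀ = 0
  constructor
  · intro hz
    exact hz i₀ hi₀
  · intro hz i hi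
    rwa [Fin.ext (hi.trans hi₀.symm)]

/-- Reversing the charts exchanges the two sides. -/
lemma flatChart_neg {X V : Type*} [TopologicalSpace X] [NormedAddCommGroup V] [NormedSpace ℝ V]
    {ℓ : V →L[ℝ] ℝ} {S P N : Set X}
    (hch : ∀ x ∈ S, ∃ φ : V → X, FlatChart S ℓ φ ∧ x ∈ range φ ∧ (∀ z, 0 < ℓ z → φ z ∈ P) ∧
      (∀ z, ℓ z < 0 → φ z ∈ N)) :
    ∀ x ∈ S, ∃ φ : V → X, FlatChart S ℓ φ ∧ x ∈ range φ ∧ (∀ z, 0 < ℓ z → φ z ∈ N) ∧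
      (∀ z, ℓ z < 0 → φ z ∈ P) := by
  intro x hx
  obtain ⟨φ, hφ, ⟨z, rfl⟩, h1, h2⟩ := hch x hx
  refine ⟨fun z => φ (-z), ⟨hφ.emb.comp (Homeomorph.neg V).isOpenEmbedding, ?_⟩, ⟨-z, by simp⟩,
    ?_, ?_⟩
  · intro z
    rw [hφ.mem_iff]; simp
  · intro z hz
    exact h2 _ (by simpa using hz)
  · intro z hz
    exact h1 _ (by simpa using hz)

lemma subset_closure_of_flatChart {X V : Type*} [TopologicalSpace X] [NormedAddCommGroup V]
    [NormedSpace ℝ V] {ℓ : V →L[ℝ] ℝ} {e : V} (he : ℓ e = 1) {S P : Set X}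
    (hch : ∀ x ∈ S, ∃ φ : V → X, FlatChart S ℓ φ ∧ x ∈ range φ ∧ (∀ z, 0 < ℓ z → φ z ∈ P)) :
    S ⊆ closure P := by
  intro x hx
  obtain ⟨φ, hφ, ⟨z, rfl⟩, h1⟩ := hch x hx
  have hz : ℓ z = 0 := (hφ.mem_iff z).1 hx
  have hc : Tendsto (fun t : ℝ => φ (z + t • e)) (𝓝[>] 0) (𝓝 (φ z)) := by
    have : Continuous fun t : ℝ => φ (z + t • e) := hφ.emb.continuous.comp (by fun_prop)
    have := this.tendsto 0
    rw [zero_smul, add_zero] at this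
    exact this.mono_left nhdsWithin_le_nhds
  refine mem_closure_of_tendsto hc ?_
  filter_upwards [self_mem_nhdsWithin] with t ht
  apply h1
  rw [map_add, map_smul, hz, he]
  simpa using ht

lemma closure_side_eq {X V : Type*} [TopologicalSpace X] [NormedAddCommGroup V]
    [NormedSpace ℝ V] {ℓ : V →L[ℝ] ℝ} {e : V} (he : ℓ e = 1) {S P : Set X}
    (hPS : IsClosed (P ∪ S))
    (hch : ∀ x ∈ S, ∃ φ : V → X, FlatChart S ℓ φ ∧ x ∈ range φ ∧ (∀ z, 0 < ℓ z → φ z ∈ P)) :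
    closure P = P ∪ S :=
  Subset.antisymm (closure_minimal subset_union_left hPS)
    (union_subset subset_closure (subset_closure_of_flatChart he hch))

lemma isClosed_side_union {X : Type*} [TopologicalSpace X] {S P N : Set X} (hN : IsOpen N)
    (hPN : Disjoint P N) (hcov : P ∪ N = Sᶜ) : IsClosed (P ∪ S) := by
  have h1 : Disjoint N S := subset_compl_iff_disjoint_right.1 (hcov ▸ subset_union_right)
  have : P ∪ S = Nᶜ := by
    ext x
    constructor
    · rintro (h | h) hxN
      · exact hPN.le_bot ⟨h, hxN⟩
      · exact h1.le_bot ⟨hxN, h⟩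
    · intro hxN
      by_cases hx : x ∈ S
      · exact Or.inr hx
      · rw [← mem_compl_iff, ← hcov] at hx
        exact Or.inl (hx.resolve_right hxN)
  rw [this]
  exact hN.isClosed_compl

end Schoenflies

open Schoenflies in
/-- The general Jordan–Schoenflies theorem: for `n ≥ 2`, a locally flat subset of the
`n`-sphere homeomorphic to the `(n-1)`-sphere separates the `n`-sphere into exactly two
connected components, and the closure of each component is homeomorphic to the closed
unit ball in `ℝⁿ`. -/
theorem jordan_schoenflies_sphere
    (n : ℕ) (hn : 2 ≤ n)
    (S : Set ↥(Metric.sphere (0 : EuclideanSpace ℝ (Fin (n + 1))) 1))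
    (hShomeo : Nonempty (S ≃ₜ Metric.sphere (0 : EuclideanSpace ℝ (Fin n)) 1))
    (hSflat : IsLocallyFlat n S) :
    Nat.card (ConnectedComponents ↥(Sᶜ)) = 2 ∧
      ∀ x ∈ Sᶜ,
        Nonempty (↥(closure (connectedComponentIn Sᶜ x)) ≃ₜ
          ↥(Metric.closedBall (0 : EuclideanSpace ℝ (Fin n)) 1)) := by
  let i₀ : Fin n := ⟨n - 1, by omega⟩
  let ℓ : EuclideanSpace ℝ (Fin n) →L[ℝ] ℝ := EuclideanSpace.proj i₀
  have he : ℓ (EuclideanSpace.single i₀ 1) = 1 := by simp [ℓ]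
  have hch := exists_flatChart (i₀ := i₀) rfl hSflat
  obtain ⟨σ⟩ := hShomeo
  have : CompactSpace S := σ.symm.compactSpace
  have hSc : IsCompact S := isCompact_iff_compactSpace.2 this
  obtain ⟨x₀, hx₀⟩ : S.Nonempty :=
    ⟨_, (σ.symm ⟨EuclideanSpace.single i₀ 1, by simp⟩).2⟩
  -- A point off `S`, from which to project stereographically.
  obtain ⟨p, hp⟩ : ∃ p, p ∉ S := by
    obtain ⟨φ, hφ, -⟩ := hch x₀ hx₀
    refine ⟨φ (EuclideanSpace.single i₀ 1), ?_⟩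
    rw [hφ.mem_iff]
    change ℓ _ ≠ 0
    rw [he]; exact one_ne_zero
  let ι : EuclideanSpace ℝ (Fin n) → Metric.sphere (0 : EuclideanSpace ℝ (Fin (n + 1))) 1 :=
    fun z => (puncturedSphereHomeo p).symm z
  have hι : Topology.IsOpenEmbedding ι :=
    isOpen_compl_singleton.isOpenEmbedding_subtypeVal.comp
      (puncturedSphereHomeo p).symm.isOpenEmbedding
  have hSι : S ⊆ Set.range ι := fun x hx =>
    ⟨puncturedSphereHomeo p ⟨x, fun h => hp (h ▸ hx)⟩, by simp [ι]⟩
  obtain ⟨R, hR, hSR⟩ :=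
    ((hι.isInducing.isCompact_preimage_iff hSι).2 hSc).isBounded.subset_ball_lt 0 0
  obtain ⟨P, N, hP, hN, hPN, hcov, hPNch⟩ := two_sided he hSc.isClosed hch hn hι hR
    (fun x hx => by
      obtain ⟨z, rfl⟩ := hSι hx
      exact ⟨z, hSR hx, rfl⟩)
  have hNPch := flatChart_neg hPNch
  have hcov' : N ∪ P = Sᶜ := Set.union_comm N P ▸ hcov
  obtain ⟨f, hfc, hfσ, hfl, hfi, hfs⟩ :=
    exists_collapse he hSc.isClosed ⟨x₀, hx₀⟩ σ hPN hcov hPNch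
  obtain ⟨f', hfc', hfσ', hfl', hfi', hfs'⟩ :=
    exists_collapse he hSc.isClosed ⟨x₀, hx₀⟩ σ hPN.symm hcov' hNPch
  have hf : Collapse P S f := ⟨hfc, hfl, fun x hx => by
    rw [hfσ ⟨x, hx⟩]; exact norm_eq_of_mem_sphere _, hfi, hfs⟩
  have hf' : Collapse N S f' := ⟨hfc', hfl', fun x hx => by
    rw [hfσ' ⟨x, hx⟩]; exact norm_eq_of_mem_sphere _, hfi', hfs'⟩
  have hff : ∀ x ∈ S, f x = f' x := fun x hx => by rw [hfσ ⟨x, hx⟩, hfσ' ⟨x, hx⟩]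
  have hPS := isClosed_side_union hN hPN hcov
  have hNS := isClosed_side_union hP hPN.symm hcov'
  have key : ∀ {P N : Set (Metric.sphere (0 : EuclideanSpace ℝ (Fin (n + 1))) 1)}
      {f f' : Metric.sphere (0 : EuclideanSpace ℝ (Fin (n + 1))) 1 → EuclideanSpace ℝ (Fin n)},
      IsOpen P → IsClosed (P ∪ S) → IsClosed (N ∪ S) → Disjoint P N → P ∪ N = Sᶜ →
      Collapse P S f → Collapse N S f' → (∀ x ∈ S, f x = f' x) →
      Nonempty (↥(P ∪ S) ≃ₜ Metric.closedBall (0 : EuclideanSpace ℝ (Fin n)) 1) ∧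
        IsPreconnected P := by
    intro P N f f' hP hPS hNS hPN hcov hf hf' hff
    have hd : Disjoint P S :=
      Set.subset_compl_iff_disjoint_right.1 (hcov ▸ Set.subset_union_left)
    obtain ⟨g, hgi, hgS, hgr⟩ := exists_injective_of_cells hP hPS hd hf fun U hU hpU =>
      Collapse.exists_cell hPS hNS hPN hcov hf hf' hff hx₀ (puncturedSphereHomeo x₀) hU hpU
    exact disk_of_injective hPS hd hf hgi hgS hgr
  obtain ⟨⟨hPb⟩, hPc⟩ := key hP hPS hNS hPN hcov hf hf' hff
  obtain ⟨⟨hNb⟩, hNc⟩ := key hN hNS hPS hPN.symm hcov' hf' hf fun x hx => (hff x hx).symm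
  have hPcl : closure P = P ∪ S := closure_side_eq he hPS fun x hx =>
    let ⟨φ, h1, h2, h3, _⟩ := hPNch x hx
    ⟨φ, h1, h2, h3⟩
  have hNcl : closure N = N ∪ S := closure_side_eq he hNS fun x hx =>
    let ⟨φ, h1, h2, h3, _⟩ := hNPch x hx
    ⟨φ, h1, h2, h3⟩
  have hPne : P.Nonempty := by
    rw [← closure_nonempty_iff, hPcl]
    exact ⟨x₀, Or.inr hx₀⟩
  have hNne : N.Nonempty := by
    rw [← closure_nonempty_iff, hNcl]
    exact ⟨x₀, Or.inr hx₀⟩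
  refine ⟨card_connectedComponents_compl hP hN hPN hcov hPc hNc hPne hNne, fun x hx => ?_⟩
  rw [← hcov] at hx
  rcases hx with hx | hx
  · rw [connectedComponentIn_compl_eq hP hN hPN hcov hPc hx, hPcl]
    exact ⟨hPb⟩
  · rw [connectedComponentIn_compl_eq hN hP hPN.symm hcov' hNc hx, hNcl]
    exact ⟨hNb⟩
end

section
/- Let C ⊆ S² be a subset of the 2-sphere (the unit sphere in ℝ³) that is homeomorphic to the circle S¹. Then S² \ C has exactly two connected components. -/
/-!
The proof uses continuous logarithms of nowhere vanishing complex functions. The exponential is a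
covering map onto `ℂ \ {0}`, so logarithms exist on simply connected spaces (`exists_log`) and can
be transported along homotopies (`exists_log_of_homotopy`), while `(z - p) ^ n` with `n ≠ 0` has no
logarithm on a circle around `p` (`no_log_on_circle`). Let `K` be a Jordan curve in the plane,
parametrized by `γ` on `[0, 1]`.

*The complement of `K` is disconnected* (`not_isPreconnected_compl`). Cut `K` into two arcs `A` and
`B` with common endpoints `a` and `b`. Sliding `b` to `a` along an arc shows that
`(z - a) / (z - b)` has a logarithm off `A`, and likewise off `B` (`exists_log_off_arc`). If
`Kᶜ = Aᶜ ∩ Bᶜ` were connected, the two logarithms would differ there by a constant, hence could be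
glued to a logarithm on the plane minus `{a, b}`. On a small circle around `a` the factor `z - b`
has a logarithm, so `z - a` would have one too, which is impossible.

*At most one component of the complement is bounded* (`bounded_component_unique`). The key is a form
of Borsuk's criterion (`no_log_of_bounded_component`): if `p` lies in a bounded component `U` of
`Kᶜ` and `q` in another component, then `(z - p) ^ n / (z - q) ^ m` with `n ≠ 0` has no logarithm
on `K`. Otherwise extend the logarithm to the plane by Tietze's theorem, and use it to replace
`(z - p) ^ n` inside `U` by a nowhere vanishing function; the result has a logarithm on the whole
plane, although it equals `(z - p) ^ n` on a large circle. On the other hand, with winding numbers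
`m` and `n` of `γ` around `p` and `q`, the function `(z - p) ^ n / (z - q) ^ m` has winding number
`0` along `γ`, so it does have a logarithm on `K`; if `n = 0`, already `z - q` has one.

*The sphere.* A curve `C` in the sphere misses some point `v`, because the plane does not embed in
the line. Stereographic projection from `v` carries `C` to a Jordan curve `K`. The punctured
neighbourhoods of `v` correspond to complements of large discs, which are connected. Hence `Cᶜ` is
disconnected because `Kᶜ` is, and every component of `Cᶜ` other than that of `v` corresponds to a
bounded component of `Kᶜ`, of which there is at most one.
-/

open Set Topology

/-! ### Continuous logarithms -/

theorem exists_log {A : Type*} [TopologicalSpace A] [SimplyConnectedSpace A]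
    [LocallyPathConnectedSpace A] {f : A → ℂ} (hf : Continuous f) (h0 : ∀ a, f a ≠ 0) :
    ∃ g : A → ℂ, Continuous g ∧ ∀ a, Complex.exp (g a) = f a := by
  obtain ⟨a₀⟩ := (inferInstance : Nonempty A)
  obtain ⟨F, ⟨-, hF⟩, -⟩ := Complex.isCoveringMapOn_exp.existsUnique_continuousMap_lifts
    ⟨f, hf⟩ (a₀ := a₀) (e₀ := Complex.log (f a₀)) (Complex.exp_log (h0 a₀)) h0
  exact ⟨F, F.continuous, congrFun hF⟩

/-- A map to `ℂ \ {0}` that is homotopic in `ℂ \ {0}` to the constant `1` has a logarithm. -/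
theorem exists_log_of_homotopy {X : Type*} [TopologicalSpace X] {H : unitInterval × X → ℂ}
    (hH : Continuous H) (h0 : ∀ y, H y ≠ 0) (h1 : ∀ x, H (0, x) = 1) :
    ∃ g : X → ℂ, Continuous g ∧ ∀ x, Complex.exp (g x) = H (1, x) := by
  let H' : C(unitInterval × X, {z : ℂ // z ≠ 0}) := ⟨fun y ↦ ⟨H y, h0 y⟩, by fun_prop⟩
  have e0 : ∀ x, H' (0, x) = (⟨_, Complex.exp_ne_zero ((ContinuousMap.const X (0 : ℂ)) x)⟩ :
      {z : ℂ // z ≠ 0}) := fun x ↦ Subtype.ext (by simp [H', h1])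
  let L := Complex.isCoveringMap_exp.liftHomotopy H' (.const X 0) e0
  refine ⟨fun x ↦ L (1, x), by fun_prop, fun x ↦ ?_⟩
  exact congrArg Subtype.val
    (congrFun (Complex.isCoveringMap_exp.liftHomotopy_lifts H' (.const X 0) e0) (1, x))

/-- On a preconnected set, a continuous logarithm of a constant function is constant. -/
theorem eq_of_exp_eq {X : Type*} [TopologicalSpace X] {s : Set X} (hs : IsPreconnected s)
    {f : X → ℂ} (hf : ContinuousOn f s) {c : ℂ} (h : ∀ x ∈ s, Complex.exp (f x) = c) {x y : X}
    (hx : x ∈ s) (hy : y ∈ s) : f x = f y := by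
  have := isPreconnected_iff_preconnectedSpace.1 hs
  exact Complex.isCoveringMap_exp.const_of_comp (continuousOn_iff_continuous_domRestrict.1 hf)
    (fun a a' ↦ Subtype.ext ((h _ a.2).trans (h _ a'.2).symm)) ⟨x, hx⟩ ⟨y, hy⟩

theorem no_log_on_circle {p : ℂ} {r : ℝ} (hr : 0 < r) {n : ℤ} (hn : n ≠ 0) {L : ℂ → ℂ}
    (hL : ContinuousOn L (Metric.sphere p r))
    (h : ∀ z ∈ Metric.sphere p r, Complex.exp (L z) = (z - p) ^ n) : False := by
  have hm : ∀ t : ℝ, circleMap p r t ∈ Metric.sphere p r := circleMap_mem_sphere p hr.le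
  have hc : Continuous fun t : ℝ ↦ L (circleMap p r t) - n * (t * Complex.I) :=
    (hL.comp_continuous (continuous_circleMap p r) hm).sub (by fun_prop)
  have key := eq_of_exp_eq isPreconnected_univ (f := fun t : ℝ ↦
    L (circleMap p r t) - n * (t * Complex.I)) hc.continuousOn (c := (r : ℂ) ^ n)
    (fun t _ ↦ by
      rw [Complex.exp_sub, h _ (hm t), Complex.exp_int_mul, circleMap, add_sub_cancel_left,
        mul_zpow, mul_div_cancel_right₀ _ (zpow_ne_zero _ (Complex.exp_ne_zero _))])
    (mem_univ 0) (mem_univ (2 * Real.pi))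
  have h2 : circleMap p r (2 * Real.pi) = circleMap p r 0 := by simp [circleMap]
  simp only [h2] at key
  have h3 : (n : ℂ) * (2 * Real.pi * Complex.I) = 0 := by
    push_cast at key
    linear_combination key
  simp [hn, Real.pi_ne_zero] at h3

/-! ### Bounded components of the complement of a plane curve -/

/-- The boundary of a component of the complement of `K` lies in `K`. -/
theorem closure_component_subset {K : Set ℂ} (hK : IsClosed K) (p : ℂ) :
    closure (connectedComponentIn Kᶜ p) ⊆ connectedComponentIn Kᶜ p ∪ K := by
  intro x hx
  by_contra! hn
  rw [mem_union, not_or] at hn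
  have ho : IsOpen (connectedComponentIn Kᶜ x) := hK.isOpen_compl.connectedComponentIn
  obtain ⟨y, hy1, hy2⟩ := mem_closure_iff.1 hx _ ho (mem_connectedComponentIn hn.2)
  apply hn.1
  rw [connectedComponentIn_eq hy2, ← connectedComponentIn_eq hy1]
  exact mem_connectedComponentIn hn.2

/-- Borsuk's criterion: if `p` lies in a bounded component of the complement of the compact set `K`
and `q` in a different component, then `(z - p) ^ n / (z - q) ^ m` with `n ≠ 0` has no logarithm
on `K`. -/
theorem no_log_of_bounded_component {K : Set ℂ} (hK : IsCompact K) {p q : ℂ} (hp : p ∉ K)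
    (hq : q ∉ K) (hb : Bornology.IsBounded (connectedComponentIn Kᶜ p))
    (hpq : q ∉ connectedComponentIn Kᶜ p) {n : ℤ} (hn : n ≠ 0) (m : ℤ) (g : C(K, ℂ))
    (hg : ∀ z : K, Complex.exp (g z) * ((z : ℂ) - q) ^ m = ((z : ℂ) - p) ^ n) : False := by
  classical
  set U := connectedComponentIn Kᶜ p with hU
  have hUo : IsOpen U := hK.isClosed.isOpen_compl.connectedComponentIn
  have hpU : p ∈ U := mem_connectedComponentIn hp
  have hcl : closure U ⊆ U ∪ K := closure_component_subset hK.isClosed p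
  obtain ⟨g', hg'⟩ := ContinuousMap.exists_restrict_eq hK.isClosed g
  have hqc : ∀ z ∈ closure U, z - q ≠ 0 := fun z hz h0 ↦ by
    rw [sub_eq_zero] at h0
    subst h0
    exact (hcl hz).elim hpq hq
  have hpc : ∀ z ∉ U, z - p ≠ 0 := fun z hz h0 ↦ hz (by rwa [sub_eq_zero.1 h0])
  -- on `K`, which contains the frontier of `U`, the two formulas agree
  let F : ℂ → ℂ := U.piecewise (fun z ↦ Complex.exp (g' z) * (z - q) ^ m) (fun z ↦ (z - p) ^ n)
  have hF : Continuous F := by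
    refine continuous_piecewise (fun z hz ↦ ?_) ?_ ?_
    · have hzK : z ∈ K := (hcl hz.1).resolve_left (by simpa [hUo.interior_eq] using hz.2)
      rw [← hg ⟨z, hzK⟩, ← hg']
      rfl
    · exact (by fun_prop : Continuous fun z ↦ Complex.exp (g' z)).continuousOn.mul
        ((by fun_prop : Continuous fun z : ℂ ↦ z - q).continuousOn.zpow₀ m
          fun z hz ↦ Or.inl (hqc z hz))
    · rw [hUo.isClosed_compl.closure_eq]
      exact (by fun_prop : Continuous fun z : ℂ ↦ z - p).continuousOn.zpow₀ n
          fun z hz ↦ Or.inl (hpc z hz)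
  have hF0 : ∀ z, F z ≠ 0 := fun z ↦ by
    by_cases hz : z ∈ U
    · simpa [F, hz, Complex.exp_ne_zero] using zpow_ne_zero m (hqc z (subset_closure hz))
    · simpa [F, hz] using zpow_ne_zero n (hpc z hz)
  obtain ⟨L, hLc, hL⟩ := exists_log hF hF0
  obtain ⟨r, hr, hUr⟩ := hb.subset_ball_lt 0 p
  refine no_log_on_circle (p := p) hr hn hLc.continuousOn fun z hz ↦ ?_
  have : z ∉ U := fun h ↦ by simpa [Metric.mem_sphere.1 hz] using hUr h
  rw [hL]
  simp [F, this]

/-- A continuous function on `[0, 1]` with equal values at the endpoints descends to the closed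
curve: by compactness, `γ` is a quotient map from `[0, 1]` onto its image. -/
theorem exists_descend {γ : ℝ → ℂ} (hγ : Continuous γ) (h01 : γ 0 = γ 1)
    (hinj : InjOn γ (Ico 0 1)) {G : ℝ → ℂ} (hG : Continuous G) (hG01 : G 0 = G 1) :
    ∃ g : C(γ '' Icc 0 1, ℂ), ∀ t (ht : t ∈ Icc (0 : ℝ) 1), g ⟨γ t, t, ht, rfl⟩ = G t := by
  let π : C(Icc (0 : ℝ) 1, γ '' Icc 0 1) := ⟨fun t ↦ ⟨γ t, t, t.2, rfl⟩, by fun_prop⟩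
  have hπ : IsQuotientMap π := by
    refine π.continuous.isClosedMap.isQuotientMap π.continuous ?_
    rintro ⟨_, t, ht, rfl⟩
    exact ⟨⟨t, ht⟩, rfl⟩
  -- injectivity is available after moving the endpoint `1` to `0`
  have key : ∀ t ∈ Icc (0 : ℝ) 1, ∃ s ∈ Ico (0 : ℝ) 1, γ s = γ t ∧ G s = G t := fun t ht ↦ by
    rcases ht.2.lt_or_eq with h | rfl
    · exact ⟨t, ⟨ht.1, h⟩, rfl, rfl⟩
    · exact ⟨0, by simp, h01, hG01⟩
  have hfac : Function.FactorsThrough (fun t : Icc (0 : ℝ) 1 ↦ G t) π := fun s t hst ↦ by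
    obtain ⟨s', hs', e1, e2⟩ := key s s.2
    obtain ⟨t', ht', e3, e4⟩ := key t t.2
    have : γ s = γ t := congrArg Subtype.val hst
    change G s = G t
    rw [← e2, ← e4, hinj hs' ht' (by rw [e1, e3, this])]
  refine ⟨hπ.lift ⟨fun t : Icc (0 : ℝ) 1 ↦ G t, by fun_prop⟩ hfac, fun t ht ↦ ?_⟩
  exact congrArg (fun f ↦ f ⟨t, ht⟩) (hπ.lift_comp ⟨fun t : Icc (0 : ℝ) 1 ↦ G t, by fun_prop⟩ hfac)

/-- The complement of a Jordan curve in the plane has at most one bounded component. -/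
theorem bounded_component_unique {γ : ℝ → ℂ} (hγ : Continuous γ) (h01 : γ 0 = γ 1)
    (hinj : InjOn γ (Ico 0 1)) {K : Set ℂ} (hK : γ '' Icc 0 1 = K) {p q : ℂ} (hp : p ∉ K)
    (hq : q ∉ K) (hpb : Bornology.IsBounded (connectedComponentIn Kᶜ p))
    (hqb : Bornology.IsBounded (connectedComponentIn Kᶜ q)) :
    q ∈ connectedComponentIn Kᶜ p := by
  by_contra hpq
  have hqp : p ∉ connectedComponentIn Kᶜ q := fun h ↦ hpq <| by
    rw [← connectedComponentIn_eq h]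
    exact mem_connectedComponentIn hq
  have hKc : IsCompact K := hK ▸ isCompact_Icc.image hγ
  -- `g` is a logarithm of `γ - w` along the parameter interval and `n` the winding number
  have log : ∀ w ∉ K, ∃ g : ℝ → ℂ, ∃ n : ℤ, Continuous g ∧
      (∀ t ∈ Icc (0 : ℝ) 1, Complex.exp (g t) = γ t - w) ∧
      g 1 = g 0 + n * (2 * Real.pi * Complex.I) := fun w hw ↦ by
    have hne : ∀ t ∈ Icc (0 : ℝ) 1, γ t - w ≠ 0 := fun t ht h ↦
      hw (by rw [← sub_eq_zero.1 h, ← hK]; exact ⟨t, ht, rfl⟩)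
    obtain ⟨g, hg, hexp⟩ := exists_log (f := fun t : ℝ ↦ γ (projIcc 0 1 zero_le_one t) - w)
      (by fun_prop) (fun t ↦ hne _ (projIcc (0 : ℝ) 1 zero_le_one t).2)
    have hexp' : ∀ t ∈ Icc (0 : ℝ) 1, Complex.exp (g t) = γ t - w := fun t ht ↦ by
      rw [hexp, projIcc_of_mem _ ht]
    obtain ⟨n, hn⟩ := Complex.exp_eq_exp_iff_exists_int.1
      ((hexp' 1 (by simp)).trans ((congrArg (· - w) h01.symm).trans (hexp' 0 (by simp)).symm))
    exact ⟨g, n, hg, hexp', hn⟩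
  obtain ⟨gp, m, hgp, hep, hm⟩ := log p hp
  obtain ⟨gq, n, hgq, heq, hn⟩ := log q hq
  -- when the winding number of `(z - p) ^ k / (z - q) ^ l` vanishes, its logarithm descends to `K`
  have fin : ∀ k l : ℤ, k * m = l * n → ∃ g : C(K, ℂ), ∀ z : K,
      Complex.exp (g z) * ((z : ℂ) - q) ^ l = ((z : ℂ) - p) ^ k := fun k l hkl ↦ by
    subst hK
    have hkl' : (k : ℂ) * m = l * n := by exact_mod_cast hkl
    obtain ⟨g, hg⟩ := exists_descend hγ h01 hinj (G := fun t ↦ k * gp t - l * gq t)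
      (by fun_prop) (by simp only [hm, hn]; linear_combination (-2 * Real.pi * Complex.I) * hkl')
    refine ⟨g, ?_⟩
    rintro ⟨_, t, ht, rfl⟩
    have h0 : γ t - q ≠ 0 := heq t ht ▸ Complex.exp_ne_zero _
    rw [hg t ht, Complex.exp_sub, Complex.exp_int_mul, Complex.exp_int_mul, hep t ht, heq t ht,
      div_mul_cancel₀ _ (zpow_ne_zero _ h0)]
  by_cases hn0 : n = 0
  · obtain ⟨g, hg⟩ := fin 0 (-1) (by simp [hn0])
    -- `z - q` itself has a logarithm on `K`
    exact no_log_of_bounded_component hKc hq hp hqb hqp one_ne_zero 0 g fun z ↦ by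
      have h0 : (z : ℂ) - q ≠ 0 := sub_ne_zero.2 fun h ↦ hq (h ▸ z.2)
      have := hg z
      rw [zpow_neg_one, zpow_zero, mul_inv_eq_one₀ h0] at this
      simpa using this
  · obtain ⟨g, hg⟩ := fin n m (mul_comm _ _)
    exact no_log_of_bounded_component hKc hp hq hpb hpq hn0 m g hg

/-! ### A Jordan curve separates the plane -/

/-- Off a set containing a path from `δ 0` to `δ 1`, the function `(z - δ 1) / (z - δ 0)` has a
logarithm, since `(z - δ t) / (z - δ 0)` is a homotopy from the constant `1`. -/
theorem exists_log_off_arc {δ : ℝ → ℂ} (hδ : Continuous δ) {A : Set ℂ}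
    (hA : ∀ t ∈ Icc (0 : ℝ) 1, δ t ∈ A) : ∃ f : ℂ → ℂ, ContinuousOn f Aᶜ ∧
      ∀ z ∉ A, Complex.exp (f z) = (z - δ 1) / (z - δ 0) := by
  classical
  have hne : ∀ t ∈ Icc (0 : ℝ) 1, ∀ z ∉ A, z - δ t ≠ 0 := fun t ht z hz h ↦
    hz (sub_eq_zero.1 h ▸ hA t ht)
  obtain ⟨g, hg, he⟩ := exists_log_of_homotopy (X := (Aᶜ : Set ℂ))
    (H := fun y ↦ ((y.2 : ℂ) - δ y.1) / ((y.2 : ℂ) - δ 0))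
    (Continuous.div (by fun_prop) (by fun_prop) fun y ↦ hne 0 (by simp) _ y.2.2)
    (fun y ↦ div_ne_zero (hne _ y.1.2 _ y.2.2) (hne 0 (by simp) _ y.2.2))
    (fun x ↦ div_self (hne 0 (by simp) _ x.2))
  refine ⟨fun z ↦ if h : z ∈ Aᶜ then g ⟨z, h⟩ else 0, ?_, fun z hz ↦ ?_⟩
  · rw [continuousOn_iff_continuous_domRestrict]
    convert hg using 2 with z
    simp
  · simpa [hz] using he ⟨z, hz⟩

theorem not_isPreconnected_compl {γ : ℝ → ℂ} (hγ : Continuous γ) (h01 : γ 0 = γ 1)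
    (hinj : InjOn γ (Ico 0 1)) {K : Set ℂ} (hK : γ '' Icc 0 1 = K) : ¬ IsPreconnected Kᶜ := by
  classical
  intro hpre
  set a := γ 0 with ha
  set b := γ (1 / 2) with hb
  have hab : a ≠ b := fun h ↦ by
    have := hinj (by simp) (by norm_num) h
    norm_num at this
  let A := γ '' Icc 0 (1 / 2)
  let B := γ '' Icc (1 / 2) 1
  have hAc : IsOpen Aᶜ := (isCompact_Icc.image hγ).isClosed.isOpen_compl
  have hBc : IsOpen Bᶜ := (isCompact_Icc.image hγ).isClosed.isOpen_compl
  have hABK : Aᶜ ∩ Bᶜ = Kᶜ := by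
    rw [← compl_union, ← image_union, Icc_union_Icc_eq_Icc (by norm_num) (by norm_num), hK]
  have hAB : ∀ z, z ∈ A → z ∈ B → z = a ∨ z = b := by
    rintro _ ⟨s, hs, rfl⟩ ⟨t, ht, hst⟩
    rcases ht.2.lt_or_eq with h | rfl
    · have := hinj ⟨by linarith [ht.1], h⟩ ⟨hs.1, by linarith [hs.2]⟩ hst
      right
      rw [hb, show s = 1 / 2 by linarith [ht.1, hs.2]]
    · left
      rw [← hst, ← h01]
  obtain ⟨f₁, hf₁, he₁⟩ := exists_log_off_arc (δ := fun t ↦ γ ((1 - t) / 2)) (by fun_prop)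
    (A := A) fun t ht ↦ ⟨_, ⟨by linarith [ht.2], by linarith [ht.1]⟩, rfl⟩
  obtain ⟨f₂, hf₂, he₂⟩ := exists_log_off_arc (δ := fun t ↦ γ ((1 + t) / 2)) (by fun_prop)
    (A := B) fun t ht ↦ ⟨_, ⟨by linarith [ht.1], by linarith [ht.2]⟩, rfl⟩
  have he₁ : ∀ z ∉ A, Complex.exp (f₁ z) = (z - a) / (z - b) := fun z hz ↦ by
    rw [he₁ z hz]; norm_num [ha, hb]
  have he₂ : ∀ z ∉ B, Complex.exp (f₂ z) = (z - a) / (z - b) := fun z hz ↦ by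
    rw [he₂ z hz]; norm_num [h01, hb]
  obtain ⟨w, hw⟩ : (Kᶜ).Nonempty := by
    rw [nonempty_compl, ← hK]
    exact (isCompact_Icc.image hγ).ne_univ
  have hquot : ∀ z ∈ Kᶜ, Complex.exp (f₁ z - f₂ z) = 1 := fun z hz ↦ by
    rw [← hABK] at hz
    rw [Complex.exp_sub, he₁ z hz.1, ← he₂ z hz.2, div_self (Complex.exp_ne_zero _)]
  -- the two logarithms differ by a constant on the complement of the curve
  obtain ⟨c, hc1, hc⟩ : ∃ c, Complex.exp c = 1 ∧ ∀ z ∈ Kᶜ, f₁ z = f₂ z + c := by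
    refine ⟨f₁ w - f₂ w, hquot w hw, fun z hz ↦ ?_⟩
    have := eq_of_exp_eq hpre (f := fun z ↦ f₁ z - f₂ z)
      (by rw [← hABK]; exact (hf₁.mono inter_subset_left).sub (hf₂.mono inter_subset_right))
      hquot hz hw
    linear_combination this
  let f : ℂ → ℂ := fun z ↦ if z ∈ A then f₂ z + c else f₁ z
  have hfA : EqOn f f₁ Aᶜ := fun z hz ↦ if_neg hz
  have hfB : EqOn f (fun z ↦ f₂ z + c) Bᶜ := fun z hz ↦ by
    by_cases h : z ∈ A
    · exact if_pos h
    · exact (if_neg h).trans (hc z (hABK ▸ ⟨h, hz⟩))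
  have hcov : ∀ z, z ≠ a → z ≠ b → z ∈ Aᶜ ∪ Bᶜ := fun z h1 h2 ↦ by
    by_contra h
    rw [mem_union, not_or, notMem_compl_iff, notMem_compl_iff] at h
    exact (hAB z h.1 h.2).elim h1 h2
  have hfc : ContinuousOn f (Aᶜ ∪ Bᶜ) :=
    (hf₁.congr hfA).union_of_isOpen ((hf₂.add continuousOn_const).congr hfB) hAc hBc
  have hfe : ∀ z ∈ Aᶜ ∪ Bᶜ, Complex.exp (f z) = (z - a) / (z - b) := by
    rintro z (hz | hz)
    · rw [hfA hz, he₁ z hz]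
    · rw [hfB hz, Complex.exp_add, hc1, mul_one, he₂ z hz]
  -- on a small circle around `a` the factor `z - b` has a logarithm, hence so would `z - a`
  have hd : 0 < ‖a - b‖ := norm_pos_iff.2 (sub_ne_zero.2 hab)
  have hsub : ∀ z ∈ Metric.sphere a (‖a - b‖ / 2), z ≠ a ∧ z ≠ b := fun z hz ↦ by
    rw [mem_sphere_iff_norm] at hz
    constructor
    · rintro rfl
      simp at hz
      linarith
    · rintro rfl
      rw [norm_sub_rev] at hz
      linarith
  have hslit : ∀ z ∈ Metric.sphere a (‖a - b‖ / 2), (z - b) / (a - b) ∈ Complex.slitPlane :=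
    fun z hz ↦ by
    rw [mem_sphere_iff_norm] at hz
    have : (z - b) / (a - b) = 1 + (z - a) / (a - b) := by
      field_simp [sub_ne_zero.2 hab]
      ring
    rw [this]
    refine Complex.mem_slitPlane_of_norm_lt_one ?_
    rw [norm_div, hz, div_div, mul_comm, ← div_div, div_self hd.ne']
    norm_num
  refine no_log_on_circle (p := a) (half_pos hd) one_ne_zero
    (L := fun z ↦ f z + (Complex.log ((z - b) / (a - b)) + Complex.log (a - b))) ?_ fun z hz ↦ ?_
  · refine (hfc.mono fun z hz ↦ hcov z (hsub z hz).1 (hsub z hz).2).add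
      (ContinuousOn.add (ContinuousOn.clog ?_ hslit) continuousOn_const)
    exact (by fun_prop : Continuous fun z ↦ (z - b) / (a - b)).continuousOn
  · have h1 := sub_ne_zero.2 hab
    have h2 := sub_ne_zero.2 (hsub z hz).2
    rw [Complex.exp_add, Complex.exp_add, hfe z (hcov z (hsub z hz).1 (hsub z hz).2),
      Complex.exp_log (div_ne_zero h2 h1), Complex.exp_log h1]
    field_simp

/-! ### Passage from the plane to the sphere -/

/-- No continuous injection from the plane to the line exists: by connectedness of the plane minus
a point, a value strictly between `f 0` and `f 1` is taken at least twice. -/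
theorem not_injective_of_continuous {f : ℂ → ℝ} (hf : Continuous f) : ¬ Function.Injective f := by
  intro hinj
  have h01 : f 0 ≠ f 1 := hinj.ne zero_ne_one
  have hconn : ∀ z : ℂ, IsPreconnected ({z}ᶜ : Set ℂ) := fun z ↦
    (isConnected_compl_singleton_of_one_lt_rank
      (by simp [Complex.rank_real_complex]) z).isPreconnected
  have hmid : (f 0 + f 1) / 2 ∈ uIcc (f 0) (f 1) := by
    rw [mem_uIcc]
    rcases le_total (f 0) (f 1) with h | h
    · left; constructor <;> linarith
    · right; constructor <;> linarith
  obtain ⟨z, hz⟩ : ∃ z, f z = (f 0 + f 1) / 2 := by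
    obtain ⟨z, -, hz⟩ := (isPreconnected_univ.image f hf.continuousOn).ordConnected.uIcc_subset
      (mem_image_of_mem f (mem_univ 0)) (mem_image_of_mem f (mem_univ 1)) hmid
    exact ⟨z, hz⟩
  have h0 : (0 : ℂ) ∈ ({z}ᶜ : Set ℂ) := fun h ↦ h01 (by
    rw [← mem_singleton_iff.1 h] at hz; linarith)
  have h1 : (1 : ℂ) ∈ ({z}ᶜ : Set ℂ) := fun h ↦ h01 (by
    rw [← mem_singleton_iff.1 h] at hz; linarith)
  obtain ⟨w, hw, hwz⟩ := ((hconn z).image f hf.continuousOn).ordConnected.uIcc_subset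
    (mem_image_of_mem f h0) (mem_image_of_mem f h1) hmid
  exact hw (hinj (hwz.trans hz.symm))

theorem isPreconnected_compl_closedBall {R : ℝ} (hR : 0 ≤ R) :
    IsPreconnected (Metric.closedBall (0 : ℂ) R)ᶜ := by
  have : (Metric.closedBall (0 : ℂ) R)ᶜ =
      (fun y : ℝ × ℝ ↦ (y.1 : ℂ) * Complex.exp (y.2 * Complex.I)) '' (Ioi R ×ˢ univ) := by
    ext z
    simp only [mem_compl_iff, Metric.mem_closedBall, dist_zero_right, not_le, mem_image, mem_prod,
      mem_Ioi, mem_univ, and_true, Prod.exists]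
    constructor
    · exact fun h ↦ ⟨‖z‖, z.arg, h, Complex.norm_mul_exp_arg_mul_I z⟩
    · rintro ⟨r, t, hr, rfl⟩
      simpa [Complex.norm_exp_ofReal_mul_I, abs_of_pos (hR.trans_lt hr)] using hr
  rw [this]
  exact (isPreconnected_Ioi.prod isPreconnected_univ).image _ (by fun_prop)

/-- The circle is the image of `[0, 1]` under a continuous map whose only coincidence is that of
the endpoints. -/
theorem exists_circle_param : ∃ ρ : ℝ → Metric.sphere (0 : EuclideanSpace ℝ (Fin 2)) 1,
    Continuous ρ ∧ ρ 0 = ρ 1 ∧ InjOn ρ (Ico 0 1) ∧ ρ '' Icc 0 1 = univ := by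
  let e := Complex.orthonormalBasisOneI.repr
  have hpi := Real.pi_pos
  refine ⟨fun t ↦ ⟨e (circleMap 0 1 (2 * Real.pi * t)), by simp⟩, ?_, ?_, ?_, ?_⟩
  · have := continuous_circleMap 0 1
    fun_prop
  · simp [circleMap]
  · intro s hs t ht hst
    have h1 := e.injective (congrArg Subtype.val hst)
    have h2 := injOn_circleMap_of_abs_sub_le' (c := 0) (R := 1) (a := 0) (b := 2 * Real.pi)
      one_ne_zero (by simp) ⟨by nlinarith [hs.1], by nlinarith [hs.2]⟩
      ⟨by nlinarith [ht.1], by nlinarith [ht.2]⟩ h1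
    exact mul_left_cancel₀ (by positivity) h2
  · refine eq_univ_of_forall fun x ↦ ?_
    -- the parameter is the argument in `[0, 2π)`, rescaled
    let θ : ℝ := toIcoMod Real.two_pi_pos 0 (e.symm x).arg
    have hθ : θ ∈ Ico 0 (0 + 2 * Real.pi) := toIcoMod_mem_Ico _ _ _
    have hx : ‖e.symm x‖ = 1 := by simp
    refine ⟨θ / (2 * Real.pi), ⟨div_nonneg hθ.1 (by positivity), ?_⟩, Subtype.ext ?_⟩
    · rw [div_le_one (by positivity)]
      linarith [hθ.2]
    · have h1 : circleMap 0 1 θ = e.symm x := by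
        obtain ⟨k, hk⟩ : ∃ k : ℤ, θ = (e.symm x).arg - k * (2 * Real.pi) :=
          ⟨toIcoDiv Real.two_pi_pos 0 (e.symm x).arg, by
            rw [← zsmul_eq_mul]; rfl⟩
        rw [hk, (periodic_circleMap 0 1).sub_int_mul_eq]
        simpa [circleMap, hx] using Complex.norm_mul_exp_arg_mul_I (e.symm x)
      change e (circleMap 0 1 (2 * Real.pi * (θ / (2 * Real.pi)))) = x
      rw [mul_div_cancel₀ _ (by positivity), h1, e.apply_symm_apply]

/-- The unit sphere of Euclidean 3-space. -/
abbrev S2 := Metric.sphere (0 : EuclideanSpace ℝ (Fin 3)) 1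

/-- Stereographic projection from `v`, with the equatorial plane identified with `ℂ`. -/
theorem exists_chart (v : S2) :
    ∃ σ : OpenPartialHomeomorph S2 ℂ, σ.source = {v}ᶜ ∧ σ.target = univ := by
  have : Fact (Module.finrank ℝ (EuclideanSpace ℝ (Fin 3)) = 2 + 1) := ⟨by simp⟩
  exact ⟨(stereographic' 2 v).transHomeomorph Complex.orthonormalBasisOneI.repr.symm.toHomeomorph,
    by simp, by simp⟩

theorem exists_circle_chart (x : Metric.sphere (0 : EuclideanSpace ℝ (Fin 2)) 1) :
    ∃ φ : Metric.sphere (0 : EuclideanSpace ℝ (Fin 2)) 1 → ℝ,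
      ContinuousOn φ {x}ᶜ ∧ InjOn φ {x}ᶜ := by
  have : Fact (Module.finrank ℝ (EuclideanSpace ℝ (Fin 2)) = 1 + 1) := ⟨by simp⟩
  let ψ := stereographic' 1 x
  have hs : ψ.source = {x}ᶜ := stereographic'_source x
  refine ⟨fun y ↦ ψ y 0, ?_, fun y hy z hz h ↦ ψ.injOn (hs ▸ hy) (hs ▸ hz) ?_⟩
  · have := ψ.continuousOn
    rw [hs] at this
    fun_prop
  · ext k
    rw [Subsingleton.elim k 0]
    exact h

/-- A subset of the sphere homeomorphic to the circle is not the whole sphere: otherwise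
stereographic projections of sphere and circle would embed the plane in the line. -/
theorem exists_notMem {C : Set S2} (e : C ≃ₜ Metric.sphere (0 : EuclideanSpace ℝ (Fin 2)) 1) :
    ∃ v, v ∉ C := by
  by_contra! hall
  obtain ⟨x⟩ : Nonempty S2 := (NormedSpace.sphere_nonempty.2 zero_le_one).to_subtype
  obtain ⟨σ, hs, ht⟩ := exists_chart x
  let i : S2 → Metric.sphere (0 : EuclideanSpace ℝ (Fin 2)) 1 := fun y ↦ e ⟨y, hall y⟩
  have hi : Continuous i := by fun_prop
  have hii : Function.Injective i := fun y z h ↦ congrArg Subtype.val (e.injective h)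
  obtain ⟨φ, hφc, hφi⟩ := exists_circle_chart (i x)
  have hσ : ∀ z, i (σ.symm z) ∈ ({i x}ᶜ : Set _) := fun z ↦ by
    have : σ.symm z ∈ σ.source := σ.map_target (by simp [ht])
    rw [hs] at this
    exact hii.ne this
  have hσc : Continuous fun z ↦ σ.symm z := by
    rw [← continuousOn_univ, ← ht]
    exact σ.continuousOn_symm
  refine not_injective_of_continuous (f := fun z ↦ φ (i (σ.symm z)))
    (hφc.comp_continuous (hi.comp hσc) hσ) fun z w h ↦ ?_
  exact σ.symm.injOn (by simp [ht]) (by simp [ht]) (hii (hφi (hσ z) (hσ w) h))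

theorem card_connectedComponents_eq_two {X : Type*} [TopologicalSpace X] (v : X)
    (h : ¬ IsPreconnected (univ : Set X))
    (h' : ∀ p q : X, p ∉ connectedComponent v → q ∉ connectedComponent v →
      q ∈ connectedComponent p) : Nat.card (ConnectedComponents X) = 2 := by
  rw [Nat.card_eq_two_iff' (ConnectedComponents.mk v)]
  obtain ⟨p, hp⟩ : ∃ p, p ∉ connectedComponent v := by
    by_contra! hall
    exact h (eq_univ_of_forall hall ▸ isPreconnected_connectedComponent)
  refine ⟨ConnectedComponents.mk p, fun hpv ↦ hp (ConnectedComponents.coe_eq_coe'.1 hpv), ?_⟩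
  intro y hy
  obtain ⟨q, rfl⟩ := ConnectedComponents.surjective_coe y
  exact ConnectedComponents.coe_eq_coe'.2
    (h' p q hp fun hq ↦ hy (ConnectedComponents.coe_eq_coe'.2 hq))

/-- Removing a point `v` does not disconnect a preconnected set that contains a neighbourhood of
`v` which stays preconnected when punctured: a separation of `s \ {v}` has the punctured
neighbourhood on one side, and adding `v` to that side gives a separation of `s`. -/
theorem IsPreconnected.diff_singleton_of_nhds {X : Type*} [TopologicalSpace X] [T1Space X]
    {s N : Set X} {v : X} (hs : IsPreconnected s) (hN : IsOpen N) (hvN : v ∈ N) (hNs : N ⊆ s)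
    (hNv : IsPreconnected (N \ {v})) : IsPreconnected (s \ {v}) := by
  have key : ∀ U V : Set X, IsOpen U → IsOpen V → s \ {v} ⊆ U ∪ V → s \ {v} ∩ (U ∩ V) = ∅ →
      N \ {v} ⊆ U → s \ {v} ⊆ U ∨ s \ {v} ⊆ V := fun U V hU hV hUV hd hNU ↦ by
    have hV' : IsOpen (V \ {v}) := hV.sdiff isClosed_singleton
    have := isPreconnected_iff_subset_of_disjoint.1 hs (U ∪ N) (V \ {v}) (hU.union hN) hV'
      (fun x hx ↦ by
        by_cases hxv : x = v
        · exact Or.inl (Or.inr (hxv ▸ hvN))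
        · exact (hUV ⟨hx, hxv⟩).imp Or.inl fun h ↦ ⟨h, hxv⟩)
      (by
        refine eq_empty_of_forall_notMem fun x ⟨hx, h1, h2⟩ ↦ ?_
        have : x ∈ s \ {v} ∩ (U ∩ V) :=
          ⟨⟨hx, h2.2⟩, h1.elim id fun h ↦ hNU ⟨h, h2.2⟩, h2.1⟩
        simp [hd] at this)
    refine this.imp (fun h x hx ↦ (h hx.1).elim id fun hxN ↦ hNU ⟨hxN, hx.2⟩)
      fun h x hx ↦ (h hx.1).1
  rw [isPreconnected_iff_subset_of_disjoint]
  intro U V hU hV hUV hd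
  have hsub : N \ {v} ⊆ s \ {v} := sdiff_subset_sdiff_left hNs
  rcases isPreconnected_iff_subset_of_disjoint.1 hNv U V hU hV (hsub.trans hUV)
    (subset_eq_empty (inter_subset_inter_left _ hsub) hd) with h | h
  · exact key U V hU hV hUV hd h
  · exact (key V U hV hU (by rwa [union_comm]) (by rwa [inter_comm V U]) h).symm

/-- The Jordan curve theorem on the sphere: a subset of the 2-sphere homeomorphic to the
circle separates the 2-sphere into exactly two connected components. -/
theorem jordan_curve_theorem_on_sphere
    (C : Set ↥(Metric.sphere (0 : EuclideanSpace ℝ (Fin 3)) 1))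
    (hChomeo : Nonempty (C ≃ₜ Metric.sphere (0 : EuclideanSpace ℝ (Fin 2)) 1)) :
    Nat.card (ConnectedComponents ↥(Cᶜ)) = 2 := by
  obtain ⟨e⟩ := hChomeo
  obtain ⟨v, hv⟩ := exists_notMem e
  obtain ⟨σ, hs, ht⟩ := exists_chart v
  obtain ⟨ρ, hρc, hρ01, hρi, hρs⟩ := exists_circle_param
  let τ : ℂ → S2 := fun z ↦ σ.symm z
  have hτc : Continuous τ := by
    rw [← continuousOn_univ, ← ht]
    exact σ.continuousOn_symm
  have hτv : ∀ z, τ z ≠ v := fun z ↦ by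
    have : τ z ∈ σ.source := σ.map_target (by simp [ht])
    rwa [hs] at this
  have hστ : ∀ z, σ (τ z) = z := fun z ↦ σ.right_inv (by simp [ht])
  have hτσ : ∀ x, x ≠ v → τ (σ x) = x := fun x hx ↦ σ.left_inv (by rwa [hs])
  have hCv : ∀ x ∈ C, x ≠ v := fun x hx h ↦ hv (h ▸ hx)
  let γ : ℝ → ℂ := fun t ↦ σ (e.symm (ρ t))
  have hγ : Continuous γ := σ.continuousOn.comp_continuous (by fun_prop) fun t ↦ by
    rw [hs]
    exact hCv _ (e.symm (ρ t)).2
  have hγ01 : γ 0 = γ 1 := by simp only [γ, hρ01]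
  have hγi : InjOn γ (Ico 0 1) := fun s h1 t h2 h ↦ by
    refine hρi h1 h2 (e.symm.injective (Subtype.ext ?_))
    rw [← hτσ _ (hCv _ (e.symm (ρ s)).2), ← hτσ _ (hCv _ (e.symm (ρ t)).2)]
    exact congrArg τ h
  let K := γ '' Icc 0 1
  have hKC : ∀ z, z ∈ K ↔ τ z ∈ C := fun z ↦ by
    constructor
    · rintro ⟨t, -, rfl⟩
      rw [hτσ _ (hCv _ (e.symm (ρ t)).2)]
      exact (e.symm (ρ t)).2
    · intro hz
      obtain ⟨t, ht, hte⟩ : e ⟨τ z, hz⟩ ∈ ρ '' Icc 0 1 := hρs ▸ mem_univ _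
      refine ⟨t, ht, ?_⟩
      simp only [γ, hte, e.symm_apply_apply, hστ]
  have hKc : IsCompact K := isCompact_Icc.image hγ
  obtain ⟨R, hR, hKR⟩ := hKc.isBounded.subset_closedBall_lt 0 0
  -- `N` is a punctured-disc neighbourhood of `v`, the outside of a large disc in the chart
  set N : Set S2 := (τ '' Metric.closedBall 0 R)ᶜ with hNdef
  have hNo : IsOpen N :=
    ((isCompact_closedBall (0 : ℂ) R).image hτc).isClosed.isOpen_compl
  have hvN : v ∈ N := fun ⟨z, _, hz⟩ ↦ hτv z hz
  have hτN : ∀ z ∉ Metric.closedBall (0 : ℂ) R, τ z ∈ N := fun z hz ⟨w, hw, hwz⟩ ↦ hz <| by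
    rwa [← hστ z, ← hwz, hστ]
  have hNC : N ⊆ Cᶜ := fun x hx hxC ↦
    hx ⟨σ x, hKR ((hKC _).2 (by rwa [hτσ x (hCv x hxC)])), hτσ x (hCv x hxC)⟩
  have hNv : N \ {v} = τ '' (Metric.closedBall 0 R)ᶜ := by
    ext x
    constructor
    · rintro ⟨hx, hxv⟩
      exact ⟨σ x, fun h ↦ hx ⟨σ x, h, hτσ x hxv⟩, hτσ x hxv⟩
    · rintro ⟨z, hz, rfl⟩
      exact ⟨hτN z hz, hτv z⟩
  have hNvp : IsPreconnected (N \ {v}) :=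
    hNv ▸ (isPreconnected_compl_closedBall hR.le).image τ hτc.continuousOn
  have hNp : IsPreconnected N := by
    refine hNvp.subset_closure sdiff_subset fun x hx ↦ ?_
    by_cases hxv : x = v
    swap
    · exact subset_closure ⟨hx, hxv⟩
    -- `v` is not isolated, since its complement, homeomorphic to the plane, is not compact
    subst hxv
    by_contra hcl
    have hso : IsOpen ({x} : Set S2) := by
      convert hNo.sdiff (isClosed_closure (s := N \ {x})) using 1
      ext y
      constructor
      · rintro rfl
        exact ⟨hx, hcl⟩
      · rintro ⟨h1, h2⟩
        by_contra hyx
        exact h2 (subset_closure ⟨h1, hyx⟩)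
    have hcpt : IsCompact (σ '' {x}ᶜ) :=
      hso.isClosed_compl.isCompact.image_of_continuousOn (hs ▸ σ.continuousOn)
    refine hcpt.ne_univ (eq_univ_of_forall fun z ↦ ⟨τ z, hτv z, hστ z⟩)
  have hτK : ∀ U ⊆ Kᶜ, τ '' U ⊆ Cᶜ := by
    rintro U hU _ ⟨z, hz, rfl⟩ h
    exact hU hz ((hKC z).2 h)
  refine card_connectedComponents_eq_two (⟨v, hv⟩ : ↥Cᶜ) (fun hpre ↦ ?_) ?_
  · have h1 : IsPreconnected Cᶜ := by
      have := hpre.image Subtype.val continuous_subtype_val.continuousOn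
      rwa [image_univ, Subtype.range_coe] at this
    have h2 := h1.diff_singleton_of_nhds hNo hvN hNC hNvp
    refine not_isPreconnected_compl hγ hγ01 hγi (K := K) rfl ?_
    convert h2.image σ (σ.continuousOn.mono fun x hx ↦ hs ▸ hx.2) using 1
    ext z
    constructor
    · exact fun hz ↦ ⟨τ z, ⟨fun h ↦ hz ((hKC z).2 h), hτv z⟩, hστ z⟩
    · rintro ⟨x, ⟨hx, hxv⟩, rfl⟩ h
      exact hx (by rw [← hτσ x hxv]; exact (hKC _).1 h)
  · -- a point outside the component of `v` lies in a bounded component of the plane picture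
    have key : ∀ p (hp : p ∈ Cᶜ), (⟨p, hp⟩ : ↥Cᶜ) ∉ connectedComponent (⟨v, hv⟩ : ↥Cᶜ) →
        p ≠ v ∧ σ p ∈ Kᶜ ∧ Bornology.IsBounded (connectedComponentIn Kᶜ (σ p)) := by
      intro p hp hpv
      have hne : p ≠ v := by
        rintro rfl
        exact hpv mem_connectedComponent
      have hσK : σ p ∈ Kᶜ := fun h ↦ hp (by rw [← hτσ p hne]; exact (hKC _).1 h)
      refine ⟨hne, hσK, Metric.isBounded_closedBall.subset (t := Metric.closedBall 0 R) ?_⟩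
      intro z hz
      by_contra hzR
      have hconn := IsPreconnected.union (τ z) (mem_image_of_mem τ hz) (hτN z hzR)
        (isPreconnected_connectedComponentIn.image τ hτc.continuousOn) hNp
      have hsub := hconn.subset_connectedComponentIn (Or.inr hvN)
        (union_subset (hτK _ (connectedComponentIn_subset _ _)) hNC)
        (Or.inl ⟨σ p, mem_connectedComponentIn hσK, hτσ p hne⟩)
      rw [connectedComponentIn_eq_image hv] at hsub
      obtain ⟨y, hy, hyp⟩ := hsub
      exact hpv (by convert hy; exact hyp.symm)
    rintro ⟨p, hp⟩ ⟨q, hq⟩ hpv hqv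
    obtain ⟨hp1, hp2, hp3⟩ := key p hp hpv
    obtain ⟨hq1, hq2, hq3⟩ := key q hq hqv
    have hmem := bounded_component_unique hγ hγ01 hγi (K := K) rfl hp2 hq2 hp3 hq3
    have hsub := (isPreconnected_connectedComponentIn.image τ
      hτc.continuousOn).subset_connectedComponentIn (F := Cᶜ)
      ⟨σ p, mem_connectedComponentIn hp2, hτσ p hp1⟩ (hτK _ (connectedComponentIn_subset _ _))
      ⟨σ q, hmem, hτσ q hq1⟩
    rw [connectedComponentIn_eq_image hp] at hsub
    obtain ⟨y, hy, hyq⟩ := hsub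
    convert hy
    exact hyq.symm
end
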